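/- arXiv:2310.13268 — 7 statements merged into one kernel-verified Lean document; each statement's English description precedes it below -/
import Mathlib

section
/- (Local order of accuracy.) Fix n ≥ 0, pairwise distinct nonzero reals r_1, …, r_n, and a base point λ_s. Let α : ℝ → ℝ be positive and continuously differentiable, let l, s, b : ℝ → ℝ^D be continuous and bounded with n continuous derivatives, let x : ℝ → ℝ^D solve x′(λ) = (α̇/α − l)·x − α·f on a neighborhood of λ_s (element-wise), and suppose the generalized parameterization g(λ) := e^{−∫_{λ_s}^{λ} s}·f(λ) − ∫_{λ_s}^{λ} e^{−∫_{λ_s}^{r} s}·b(r)dr along this exact trajectory is (n+1)-times continuously differentiable. For h > 0 set λ_t := λ_s + h and λ_{i_k} := λ_s + r_k·h, δ_k := r_k·h; let (ĝ^{(1)}, ĝ^{(2)}/2!, …, ĝ^{(n)}/n!) be the solution of the n×n linear system whose (k,j) matrix entry is δ_k^j and whose k-th right-hand side is g(λ_{i_k}) − g(λ_s), set ĝ^{(0)} := g(λ_s), and define x̂_t := α(λ_t)·A(λ_s,λ_t)·( x(λ_s)/α(λ_s) − ∫_{λ_s}^{λ_t} E_{λ_s}(λ)·B_{λ_s}(λ)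 dλ − Σ_{k=0}^{n} ĝ^{(k)}·∫_{λ_s}^{λ_t} E_{λ_s}(λ)·(λ−λ_s)^k/k! dλ ). Then there exist constants C > 0 and h₀ > 0 such that for all 0 < h ≤ h₀, ‖ x̂_t − x(λ_t) ‖ ≤ C·h^{n+2}. -/
/-!
Everything happens coordinatewise. Variation of constants turns the ODE into the exact formula
`x(λs + h) = α e^{-∫l} (x(λs)/α(λs) - ∫ E·(g + B))` (`exact_solution`), so the error of the scheme
is the bounded factor `α e^{-∫l}` times `∫ E·(g - p)` over `[λs, λs + h]`, where
`p(v) = g(λs) + ∑ u_j (v - λs)^{j+1}` is the polynomial interpolating `g` at `λs` and at the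
points `λs + r_k h`.

It remains to see that `g - p = O(h^{n+1})` on that interval (`interpolation_error_integral`).
By Taylor, `g(λs + t) = g(λs) + ∑ c_j t^{j+1} + O(|t|^{n+1})` on both sides of `λs`
(`taylor_two_sided`). Subtracting this from the interpolation conditions, the rescaled
coefficient errors `z_j = h^{j+1}(u_j - c_j)` solve a linear system with the `h`-independent
matrix `r_k^{j+1}` and right-hand side `O(h^{n+1})`. That matrix is invertible, being a
Vandermonde matrix with nonzero row scalings, so `z_j = O(h^{n+1})` (`vandermonde_bound`), which
is all that is needed since `|u_j - c_j| t^{j+1} ≤ |z_j|` for `0 ≤ t ≤ h`.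
-/

open MeasureTheory Set
open Filter Topology

/-- Two-sided Taylor estimate with a remainder of order `n + 1`, obtained from the little-o Taylor
formula of order `n + 1` by moving its top-degree term into the remainder. -/
lemma taylor_two_sided (n : ℕ) (ls a : ℝ) (ha : 0 < a) (G : ℝ → ℝ)
    (hG : ContDiffOn ℝ (n + 1 : ℕ∞) G (Icc (ls - a) (ls + a))) :
    ∃ c : Fin n → ℝ, ∃ M > (0:ℝ), ∃ δ > (0:ℝ), ∀ t, |t| ≤ δ →
      |G (ls + t) - G ls - ∑ j : Fin n, c j * t ^ ((j : ℕ) + 1)| ≤ M * |t| ^ (n + 1) := by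
  set S := Icc (ls - a) (ls + a) with hS
  have hmem : ls ∈ S := ⟨by linarith, by linarith⟩
  have hnhds : S ∈ 𝓝 ls := Icc_mem_nhds (by linarith) (by linarith)
  have hG' : ContDiffOn ℝ ((n + 1 : ℕ)) G S := by
    refine hG.of_le (le_of_eq ?_)
    push_cast
    rfl
  have h1 := taylor_isLittleO (convex_Icc _ _) hmem hG'
  rw [← hS, nhdsWithin_eq_nhds.2 hnhds] at h1
  have h2 := h1.bound one_pos
  obtain ⟨δ, hδ, hb⟩ := Metric.eventually_nhds_iff_ball.1 h2
  set d : ℕ → ℝ := fun k => (k.factorial : ℝ)⁻¹ * iteratedDerivWithin k G S ls with hd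
  have hT : ∀ y, taylorWithinEval G (n + 1) S ls y
      = G ls + ∑ j : Fin n, d (j + 1) * (y - ls) ^ ((j : ℕ) + 1)
        + d (n + 1) * (y - ls) ^ (n + 1) := by
    intro y
    rw [taylor_within_apply, Finset.sum_range_succ, Finset.sum_range_succ',
      Fin.sum_univ_eq_sum_range (fun j => d (j + 1) * (y - ls) ^ (j + 1)) n]
    simp only [hd, smul_eq_mul, iteratedDerivWithin_zero, pow_zero, Nat.factorial_zero,
      Nat.cast_one, inv_one, one_mul]
    have : ∀ k ∈ Finset.range n, (((k + 1).factorial : ℝ)⁻¹ * (y - ls) ^ (k + 1))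
          * iteratedDerivWithin (k + 1) G S ls
        = ((k + 1).factorial : ℝ)⁻¹ * iteratedDerivWithin (k + 1) G S ls * (y - ls) ^ (k + 1) :=
      fun k _ => by ring
    rw [Finset.sum_congr rfl this]
    ring
  refine ⟨fun j => d (j + 1), 1 + |d (n + 1)|, by positivity, δ / 2, by positivity, ?_⟩
  intro t ht
  have hb' := hb (ls + t) (by simp; linarith)
  rw [hT] at hb'
  simp only [add_sub_cancel_left, Real.norm_eq_abs, one_mul, abs_pow] at hb'
  have e : G (ls + t) - G ls - ∑ j : Fin n, d (j + 1) * t ^ ((j : ℕ) + 1)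
      = (G (ls + t) - (G ls + ∑ j : Fin n, d (j + 1) * t ^ ((j : ℕ) + 1)
        + d (n + 1) * t ^ (n + 1))) + d (n + 1) * t ^ (n + 1) := by ring
  rw [e]
  refine (abs_add_le _ _).trans ?_
  rw [abs_mul, abs_pow]
  linarith

/-- Stability of the linear system with matrix `r_k^{j+1}`; the constant is the sum of the
absolute values of the entries of the inverse matrix. -/
lemma vandermonde_bound (n : ℕ) (r : Fin n → ℝ) (hrne : ∀ k, r k ≠ 0)
    (hrinj : Function.Injective r) :
    ∃ K ≥ (0:ℝ), ∀ (z : Fin n → ℝ) (ε : ℝ),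
      (∀ k, |∑ j : Fin n, r k ^ ((j : ℕ) + 1) * z j| ≤ ε) → ∀ j, |z j| ≤ K * ε := by
  set V : Matrix (Fin n) (Fin n) ℝ := Matrix.diagonal r * Matrix.vandermonde r with hV
  have hdet : IsUnit V.det := by
    rw [hV, Matrix.det_mul, Matrix.det_diagonal, isUnit_iff_ne_zero]
    exact mul_ne_zero (Finset.prod_ne_zero_iff.2 fun k _ => hrne k)
      (Matrix.det_vandermonde_ne_zero_iff.2 hrinj)
  refine ⟨∑ j, ∑ k, |V⁻¹ j k|, by positivity, fun z ε hz j => ?_⟩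
  have hVz : ∀ k, |V.mulVec z k| ≤ ε := by
    intro k
    have e : V.mulVec z k = ∑ j : Fin n, r k ^ ((j : ℕ) + 1) * z j := by
      change ∑ j, V k j * z j = _
      refine Finset.sum_congr rfl fun j _ => ?_
      rw [hV, Matrix.diagonal_mul, Matrix.vandermonde_apply, pow_succ']
    rw [e]
    exact hz k
  have hzj : z j = ∑ k, V⁻¹ j k * V.mulVec z k := by
    have : z = V⁻¹.mulVec (V.mulVec z) := by
      rw [Matrix.mulVec_mulVec, Matrix.nonsing_inv_mul _ hdet, Matrix.one_mulVec]
    exact congrFun this j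
  have hε : 0 ≤ ε := (abs_nonneg _).trans (hz j)
  calc |z j| ≤ ∑ k, |V⁻¹ j k| * ε := by
        rw [hzj]
        refine (Finset.abs_sum_le_sum_abs _ _).trans (Finset.sum_le_sum fun k _ => ?_)
        rw [abs_mul]
        exact mul_le_mul_of_nonneg_left (hVz k) (abs_nonneg _)
    _ = (∑ k, |V⁻¹ j k|) * ε := by rw [Finset.sum_mul]
    _ ≤ _ := by
        refine mul_le_mul_of_nonneg_right ?_ hε
        exact Finset.single_le_sum (f := fun j => ∑ k, |V⁻¹ j k|)
          (fun j _ => by positivity) (Finset.mem_univ j)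

/-- The weighted integral over `[λs, λs + h]` of the interpolation error of `G` is
`O(h^{n+2})`. -/
lemma interpolation_error_integral (n : ℕ) (r : Fin n → ℝ) (hrne : ∀ k, r k ≠ 0)
    (hrinj : Function.Injective r) (ls a : ℝ) (ha : 0 < a) (G E : ℝ → ℝ) (hE : Continuous E)
    (hG : ContDiffOn ℝ (n + 1 : ℕ∞) G (Icc (ls - a) (ls + a))) :
    ∃ C > (0:ℝ), ∀ᶠ h in 𝓝[>] (0:ℝ), ∀ u : Fin n → ℝ,
      (∀ k, (∑ j : Fin n, (r k * h) ^ ((j : ℕ) + 1) * u j) = G (ls + r k * h) - G ls) →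
      |∫ v in ls..(ls + h), E v * (G v - G ls - ∑ j : Fin n, u j * (v - ls) ^ ((j : ℕ) + 1))|
        ≤ C * h ^ (n + 2) := by
  obtain ⟨c, M, hM, δ, hδ, hT⟩ := taylor_two_sided n ls a ha G hG
  obtain ⟨K, hK, hVan⟩ := vandermonde_bound n r hrne hrinj
  obtain ⟨η, hη, hEb⟩ := Metric.eventually_nhds_iff_ball.1
    ((hE.abs.tendsto ls).eventually (gt_mem_nhds (lt_add_one |E ls|)))
  -- `R` bounds all the `|r k|`
  set R : ℝ := 1 + ∑ k, |r k| with hR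
  have hR1 : 1 ≤ R := by
    rw [hR]
    linarith [Finset.sum_nonneg fun (k : Fin n) (_ : k ∈ Finset.univ) => abs_nonneg (r k)]
  have hrR : ∀ k, |r k| ≤ R := fun k => by
    have := Finset.single_le_sum (f := fun k => |r k|) (fun j _ => abs_nonneg _)
      (Finset.mem_univ k)
    rw [hR]
    linarith
  have hR0 : 0 < R := by linarith
  set Q : ℝ := M + n * (K * (M * R ^ (n + 1))) with hQ
  have hQ0 : 0 < Q := by positivity
  refine ⟨(|E ls| + 1) * Q, by positivity, ?_⟩
  have hev : ∀ᶠ h in 𝓝[>] (0:ℝ), h < min (δ / R) η :=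
    nhdsWithin_le_nhds (gt_mem_nhds (by positivity))
  filter_upwards [hev, self_mem_nhdsWithin] with h hh hpos u hu
  have hpos : 0 < h := hpos
  have hhδ : R * h < δ := by
    have := hh.trans_le (min_le_left _ _)
    rw [lt_div_iff₀ hR0] at this
    linarith
  have hhη : h < η := hh.trans_le (min_le_right _ _)
  have hz : ∀ j : Fin n, |h ^ ((j : ℕ) + 1) * (u j - c j)|
      ≤ K * (M * R ^ (n + 1) * h ^ (n + 1)) := by
    refine hVan (fun j => h ^ ((j : ℕ) + 1) * (u j - c j)) _ fun k => ?_
    have hrk : |r k * h| ≤ R * h := by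
      rw [abs_mul, abs_of_pos hpos]
      exact mul_le_mul_of_nonneg_right (hrR k) hpos.le
    have e : ∑ j : Fin n, r k ^ ((j : ℕ) + 1) * (h ^ ((j : ℕ) + 1) * (u j - c j))
        = G (ls + r k * h) - G ls - ∑ j : Fin n, c j * (r k * h) ^ ((j : ℕ) + 1) := by
      rw [← hu k, ← Finset.sum_sub_distrib]
      exact Finset.sum_congr rfl fun j _ => by ring
    rw [e]
    refine (hT _ (hrk.trans hhδ.le)).trans ?_
    rw [mul_assoc, ← mul_pow]
    gcongr
  have hpt : ∀ v ∈ uIoc ls (ls + h),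
      ‖E v * (G v - G ls - ∑ j : Fin n, u j * (v - ls) ^ ((j : ℕ) + 1))‖
        ≤ (|E ls| + 1) * (Q * h ^ (n + 1)) := by
    intro v hv
    rw [uIoc_of_le (by linarith)] at hv
    obtain ⟨t, rfl⟩ : ∃ t, v = ls + t := ⟨v - ls, by ring⟩
    have ht0 : 0 < t := by linarith [hv.1]
    have hth : t ≤ h := by linarith [hv.2]
    rw [Real.norm_eq_abs, abs_mul, add_sub_cancel_left]
    have hE' : |E (ls + t)| ≤ |E ls| + 1 :=
      (hEb (ls + t) (by simp [abs_of_pos ht0]; linarith)).le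
    refine mul_le_mul hE' ?_ (abs_nonneg _) (by positivity)
    have e : G (ls + t) - G ls - ∑ j : Fin n, u j * t ^ ((j : ℕ) + 1)
        = (G (ls + t) - G ls - ∑ j : Fin n, c j * t ^ ((j : ℕ) + 1))
          - ∑ j : Fin n, t ^ ((j : ℕ) + 1) * (u j - c j) := by
      rw [sub_sub _ (∑ j : Fin n, c j * t ^ ((j : ℕ) + 1)), ← Finset.sum_add_distrib]
      congr 1
      exact Finset.sum_congr rfl fun j _ => by ring
    have hTt := hT t (by rw [abs_of_pos ht0]; nlinarith)
    rw [abs_of_pos ht0] at hTt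
    have hs : |∑ j : Fin n, t ^ ((j : ℕ) + 1) * (u j - c j)|
        ≤ ∑ _j : Fin n, K * (M * R ^ (n + 1) * h ^ (n + 1)) := by
      refine (Finset.abs_sum_le_sum_abs _ _).trans (Finset.sum_le_sum fun j _ => ?_)
      refine le_trans ?_ (hz j)
      rw [abs_mul, abs_mul, abs_of_pos (pow_pos ht0 _), abs_of_pos (pow_pos hpos _)]
      gcongr
    rw [Finset.sum_const, Finset.card_univ, Fintype.card_fin, nsmul_eq_mul] at hs
    have hMt : M * t ^ (n + 1) ≤ M * h ^ (n + 1) := by gcongr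
    rw [e]
    refine (abs_sub _ _).trans ?_
    rw [hQ]
    linarith
  have := intervalIntegral.norm_integral_le_of_norm_le_const hpt
  rw [Real.norm_eq_abs, add_sub_cancel_left, abs_of_pos hpos] at this
  refine this.trans (le_of_eq ?_)
  ring

/-- Variation of constants for one coordinate: `(x / α) e^{∫l}` has derivative `-e^{∫l} f`. -/
lemma exact_solution (ls a h : ℝ) (hpos : 0 < h) (hha : h ≤ a)
    (α α' l f x : ℝ → ℝ) (hαpos : ∀ u, 0 < α u) (hα : ∀ u, HasDerivAt α (α' u) u)
    (hl : Continuous l) (hf : Continuous f)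
    (hx : ∀ u ∈ Icc (ls - a) (ls + a),
      HasDerivWithinAt x ((α' u / α u - l u) * x u - α u * f u) (Icc (ls - a) (ls + a)) u) :
    x (ls + h) = α (ls + h) * Real.exp (-(∫ τ in ls..(ls + h), l τ)) *
      (x ls / α ls - ∫ v in ls..(ls + h), Real.exp (∫ τ in ls..v, l τ) * f v) := by
  have hL : ∀ v, HasDerivAt (fun v => ∫ τ in ls..v, l τ) (l v) v := fun v =>
    intervalIntegral.integral_hasDerivAt_right (hl.intervalIntegrable _ _)
      hl.stronglyMeasurable.stronglyMeasurableAtFilter hl.continuousAt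
  have hLc : Continuous fun v => ∫ τ in ls..v, l τ :=
    continuous_iff_continuousAt.2 fun v => (hL v).continuousAt
  have hαc : Continuous α := continuous_iff_continuousAt.2 fun v => (hα v).continuousAt
  have hsub : Icc ls (ls + h) ⊆ Icc (ls - a) (ls + a) :=
    Icc_subset_Icc (by linarith) (by linarith)
  have key : ∫ v in ls..(ls + h), -(Real.exp (∫ τ in ls..v, l τ) * f v)
      = x (ls + h) / α (ls + h) * Real.exp (∫ τ in ls..(ls + h), l τ)
        - x ls / α ls * Real.exp (∫ τ in ls..ls, l τ) := by
    refine intervalIntegral.integral_eq_sub_of_hasDerivAt_of_le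
      (f := fun v => x v / α v * Real.exp (∫ τ in ls..v, l τ)) (by linarith) ?_ ?_ ?_
    · have hxc : ContinuousOn x (Icc ls (ls + h)) := fun v hv =>
        (hx v (hsub hv)).continuousWithinAt.mono hsub
      exact (hxc.div hαc.continuousOn fun v _ => (hαpos v).ne').mul
        (Real.continuous_exp.comp hLc).continuousOn
    · intro v hv
      have hxv := (hx v (hsub ⟨hv.1.le, hv.2.le⟩)).hasDerivAt
        (Icc_mem_nhds (by linarith [hv.1]) (by linarith [hv.2]))
      have hne := (hαpos v).ne'
      convert! (hxv.div (hα v) hne).mul (hL v).exp using 1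
      simp only [Pi.div_apply]
      field_simp
      ring
    · exact (((Real.continuous_exp.comp hLc).mul hf).neg).intervalIntegrable _ _
  rw [intervalIntegral.integral_neg, intervalIntegral.integral_same, Real.exp_zero, mul_one] at key
  have key' : x ls / α ls - ∫ v in ls..(ls + h), Real.exp (∫ τ in ls..v, l τ) * f v
      = x (ls + h) / α (ls + h) * Real.exp (∫ τ in ls..(ls + h), l τ) := by linarith
  rw [key', Real.exp_neg]
  have := (hαpos (ls + h)).ne'
  field_simp

/-- The error bound for a single coordinate. -/
lemma scalar_local_error (n : ℕ) (r : Fin n → ℝ) (hrne : ∀ k, r k ≠ 0)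
    (hrinj : Function.Injective r) (ls a : ℝ) (ha : 0 < a)
    (α α' l s b f x g : ℝ → ℝ) (hαpos : ∀ u, 0 < α u) (hα : ∀ u, HasDerivAt α (α' u) u)
    (hl : Continuous l) (hs : Continuous s) (hb : Continuous b) (hf : Continuous f)
    (hx : ∀ u ∈ Icc (ls - a) (ls + a),
      HasDerivWithinAt x ((α' u / α u - l u) * x u - α u * f u) (Icc (ls - a) (ls + a)) u)
    (hgdef : ∀ u, g u = Real.exp (-(∫ τ in ls..u, s τ)) * f u
        - ∫ rr in ls..u, Real.exp (-(∫ τ in ls..rr, s τ)) * b rr)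
    (hg : ContDiffOn ℝ (n + 1 : ℕ∞) g (Icc (ls - a) (ls + a))) :
    ∃ C > (0:ℝ), ∀ᶠ h in 𝓝[>] (0:ℝ), ∀ u : Fin n → ℝ,
      (∀ k, (∑ j : Fin n, (r k * h) ^ ((j : ℕ) + 1) * u j) = g (ls + r k * h) - g ls) →
      |α (ls + h) * Real.exp (-(∫ τ in ls..(ls + h), l τ)) *
              (x ls / α ls
                - (∫ v in ls..(ls + h), Real.exp (∫ τ in ls..v, l τ + s τ) *
                    (∫ rr in ls..v, Real.exp (-(∫ τ in ls..rr, s τ)) * b rr))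
                - g ls * (∫ v in ls..(ls + h), Real.exp (∫ τ in ls..v, l τ + s τ))
                - ∑ j : Fin n, (Nat.factorial ((j : ℕ) + 1) : ℝ) * u j *
                    ∫ v in ls..(ls + h), Real.exp (∫ τ in ls..v, l τ + s τ) *
                      (v - ls) ^ ((j : ℕ) + 1) / (Nat.factorial ((j : ℕ) + 1) : ℝ))
            - x (ls + h)| ≤ C * h ^ (n + 2) := by
  have hprim : ∀ {p : ℝ → ℝ}, Continuous p → Continuous fun v => ∫ τ in ls..v, p τ :=
    fun hp => intervalIntegral.continuous_primitive (fun _ _ => hp.intervalIntegrable _ _) ls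
  have hαc : Continuous α := continuous_iff_continuousAt.2 fun v => (hα v).continuousAt
  set E : ℝ → ℝ := fun v => Real.exp (∫ τ in ls..v, l τ + s τ) with hEdef
  set B : ℝ → ℝ := fun v => ∫ rr in ls..v, Real.exp (-(∫ τ in ls..rr, s τ)) * b rr with hBdef
  have hE : Continuous E := Real.continuous_exp.comp (hprim (hl.add hs))
  have hSc : Continuous fun v => Real.exp (-(∫ τ in ls..v, s τ)) :=
    Real.continuous_exp.comp (hprim hs).neg
  have hB : Continuous B := hprim (hSc.mul hb)
  have hgc : Continuous g := by
    rw [show g = fun u => Real.exp (-(∫ τ in ls..u, s τ)) * f u - B u from funext hgdef]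
    exact (hSc.mul hf).sub hB
  obtain ⟨C, hC, hbound⟩ := interpolation_error_integral n r hrne hrinj ls a ha g E hE hg
  set P : ℝ → ℝ := fun h => α (ls + h) * Real.exp (-(∫ τ in ls..(ls + h), l τ)) with hPdef
  have hshift : Continuous fun h : ℝ => ls + h := continuous_const.add continuous_id
  have hP : Continuous P := (hαc.comp hshift).mul
    (Real.continuous_exp.comp (((hprim hl).comp hshift).neg))
  have hPb : ∀ᶠ h in 𝓝[>] (0:ℝ), |P h| < |P 0| + 1 :=
    nhdsWithin_le_nhds ((hP.abs.tendsto 0).eventually (gt_mem_nhds (lt_add_one |P 0|)))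
  have hsmall : ∀ᶠ h in 𝓝[>] (0:ℝ), h < a := nhdsWithin_le_nhds (gt_mem_nhds ha)
  refine ⟨(|P 0| + 1) * C, by positivity, ?_⟩
  filter_upwards [hbound, hPb, hsmall, self_mem_nhdsWithin] with h hb1 hPh hha hpos u hu
  have hpos : 0 < h := hpos
  -- `e^{∫l} f = E (g + B)`, by the definition of `g`
  have hfg : ∀ v, Real.exp (∫ τ in ls..v, l τ) * f v = E v * (g v + B v) := by
    intro v
    have h1 : g v + B v = Real.exp (-(∫ τ in ls..v, s τ)) * f v := by rw [hgdef v]; ring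
    rw [h1, hEdef]
    simp only
    rw [intervalIntegral.integral_add (hl.intervalIntegrable _ _) (hs.intervalIntegrable _ _),
      ← mul_assoc, ← Real.exp_add]
    ring_nf
  have hex := exact_solution ls a h hpos hha.le α α' l f x hαpos hα hl hf hx
  simp only [hfg] at hex
  have ii : ∀ {p : ℝ → ℝ}, Continuous p → IntervalIntegrable p volume ls (ls + h) :=
    fun hp => hp.intervalIntegrable _ _
  have hmono : ∀ j : Fin n, Continuous fun v => u j * (E v * (v - ls) ^ ((j : ℕ) + 1)) := by
    intro j
    fun_prop
  have hsum : ∑ j : Fin n, (Nat.factorial ((j : ℕ) + 1) : ℝ) * u j *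
        ∫ v in ls..(ls + h), E v * (v - ls) ^ ((j : ℕ) + 1) / (Nat.factorial ((j : ℕ) + 1) : ℝ)
      = ∫ v in ls..(ls + h), ∑ j : Fin n, u j * (E v * (v - ls) ^ ((j : ℕ) + 1)) := by
    rw [intervalIntegral.integral_finsetSum fun j _ => ii (hmono j)]
    refine Finset.sum_congr rfl fun j _ => ?_
    have hfac : (Nat.factorial ((j : ℕ) + 1) : ℝ) ≠ 0 := by positivity
    rw [intervalIntegral.integral_div, intervalIntegral.integral_const_mul]
    field_simp
  have hsplit : (∫ v in ls..(ls + h),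
        E v * (g v - g ls - ∑ j : Fin n, u j * (v - ls) ^ ((j : ℕ) + 1)))
      = (∫ v in ls..(ls + h), E v * (g v + B v)) - (∫ v in ls..(ls + h), E v * B v)
        - g ls * (∫ v in ls..(ls + h), E v)
        - ∫ v in ls..(ls + h), ∑ j : Fin n, u j * (E v * (v - ls) ^ ((j : ℕ) + 1)) := by
    have c1 : Continuous fun v => E v * (g v + B v) := hE.mul (hgc.add hB)
    have c2 : Continuous fun v => E v * B v := hE.mul hB
    have c3 : Continuous fun v => g ls * E v := continuous_const.mul hE
    have c4 : Continuous fun v => ∑ j : Fin n, u j * (E v * (v - ls) ^ ((j : ℕ) + 1)) :=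
      continuous_finsetSum _ fun j _ => hmono j
    have c12 : Continuous fun v => E v * (g v + B v) - E v * B v := c1.sub c2
    have c123 : Continuous fun v => E v * (g v + B v) - E v * B v - g ls * E v := c12.sub c3
    rw [← intervalIntegral.integral_const_mul, ← intervalIntegral.integral_sub (ii c1) (ii c2),
      ← intervalIntegral.integral_sub (ii c12) (ii c3),
      ← intervalIntegral.integral_sub (ii c123) (ii c4)]
    refine intervalIntegral.integral_congr fun v _ => ?_
    rw [mul_sub, Finset.mul_sum,
      Finset.sum_congr rfl fun j _ => mul_left_comm (E v) (u j) ((v - ls) ^ ((j : ℕ) + 1))]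
    ring
  rw [hsum, hex]
  change |P h * _ - P h * _| ≤ _
  rw [← mul_sub, abs_mul]
  refine (mul_le_mul hPh.le (?_ : _ ≤ C * h ^ (n + 2)) (abs_nonneg _) (by positivity)).trans
    (le_of_eq (by ring))
  convert hb1 u hu using 2
  rw [hsplit]
  ring

/-- **Local order of accuracy of the `(n+1)`-th order local approximation (Theorem 3.1).**
If the extra points `λ_{i_k} = λs + r_k·h` lie on the exact ODE trajectory and the
high-order derivatives of `g` are estimated by the Vandermonde-type linear system, then the
local truncation error of the `(n+1)`-th order update is `O(h^{n+2})`. -/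
theorem dpm_solver_v3_local_order_of_accuracy
    (D n : ℕ) (hD : 1 ≤ D)
    (r : Fin n → ℝ) (hrne : ∀ k, r k ≠ 0) (hrinj : Function.Injective r)
    (ls a : ℝ) (ha : 0 < a)
    (α α' : ℝ → ℝ) (hαpos : ∀ u, 0 < α u)
    (hα : ∀ u, HasDerivAt α (α' u) u) (hα' : Continuous α')
    (l s b : ℝ → Fin D → ℝ)
    (hl : ContDiff ℝ n l) (hs : ContDiff ℝ n s) (hb : ContDiff ℝ n b)
    (Cl Cs Cb : ℝ)
    (hlB : ∀ u i, |l u i| ≤ Cl) (hsB : ∀ u i, |s u i| ≤ Cs) (hbB : ∀ u i, |b u i| ≤ Cb)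
    (f : ℝ → Fin D → ℝ) (hf : Continuous f)
    -- the exact solution `x` of `x′ = (α̇/α − l)·x − α·f` on a neighborhood of `λs`
    (x : ℝ → Fin D → ℝ)
    (hx : ∀ u ∈ Set.Icc (ls - a) (ls + a), ∀ i : Fin D,
      HasDerivWithinAt (fun v => x v i)
        ((α' u / α u - l u i) * x u i - α u * f u i) (Set.Icc (ls - a) (ls + a)) u)
    -- the generalized parameterization `g` along the exact trajectory
    (g : ℝ → Fin D → ℝ)
    (hgdef : ∀ u i, g u i = Real.exp (-(∫ τ in ls..u, s τ i)) * f u i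
        - ∫ rr in ls..u, Real.exp (-(∫ τ in ls..rr, s τ i)) * b rr i)
    -- `g` is `(n+1)`-times continuously differentiable
    (hgsmooth : ContDiffOn ℝ (n + 1 : ℕ∞) g (Set.Icc (ls - a) (ls + a))) :
    ∃ C > (0:ℝ), ∃ h₀ > (0:ℝ), ∀ h : ℝ, 0 < h → h ≤ h₀ →
      ∀ u : Fin n → Fin D → ℝ,
        -- `u j` is the finite-difference estimate of `g^{(j+1)}(λs)/(j+1)!`, obtained by
        -- solving the linear system with matrix entries `δ_k^j`, `δ_k = r_k·h`
        (∀ k : Fin n, ∀ i : Fin D,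
          (∑ j : Fin n, (r k * h) ^ ((j : ℕ) + 1) * u j i)
            = g (ls + r k * h) i - g ls i) →
        -- the `(n+1)`-th order local approximation has `O(h^{n+2})` error
        ‖((fun i =>
            α (ls + h) * Real.exp (-(∫ τ in ls..(ls + h), l τ i)) *
              (x ls i / α ls
                - (∫ v in ls..(ls + h), Real.exp (∫ τ in ls..v, l τ i + s τ i) *
                    (∫ rr in ls..v, Real.exp (-(∫ τ in ls..rr, s τ i)) * b rr i))
                - g ls i * (∫ v in ls..(ls + h), Real.exp (∫ τ in ls..v, l τ i + s τ i))
                - ∑ j : Fin n, (Nat.factorial ((j : ℕ) + 1) : ℝ) * u j i *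
                    ∫ v in ls..(ls + h), Real.exp (∫ τ in ls..v, l τ i + s τ i) *
                      (v - ls) ^ ((j : ℕ) + 1) / (Nat.factorial ((j : ℕ) + 1) : ℝ))
            - x (ls + h) i) : Fin D → ℝ)‖
          ≤ C * h ^ (n + 2) := by
  have hl' : ∀ i, Continuous fun v => l v i := fun i => (continuous_apply i).comp hl.continuous
  have hs' : ∀ i, Continuous fun v => s v i := fun i => (continuous_apply i).comp hs.continuous
  have hb' : ∀ i, Continuous fun v => b v i := fun i => (continuous_apply i).comp hb.continuous
  have hf' : ∀ i, Continuous fun v => f v i := fun i => (continuous_apply i).comp hf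
  choose C hC hev using fun i : Fin D =>
    scalar_local_error n r hrne hrinj ls a ha α α' (fun v => l v i) (fun v => s v i)
      (fun v => b v i) (fun v => f v i) (fun v => x v i) (fun v => g v i) hαpos hα
      (hl' i) (hs' i) (hb' i) (hf' i) (fun u hu => hx u hu i) (fun u => hgdef u i)
      (contDiffOn_pi.1 hgsmooth i)
  obtain ⟨h₀, hh₀, hsub⟩ :=
    mem_nhdsGT_iff_exists_Ioc_subset.1 (Filter.eventually_all.2 hev)
  have hsum : 0 ≤ ∑ i, C i := Finset.sum_nonneg fun i _ => (hC i).le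
  refine ⟨∑ i, C i + 1, by linarith, h₀, hh₀, fun h hpos hle u hu => ?_⟩
  have hmain := hsub ⟨hpos, hle⟩
  refine (pi_norm_le_iff_of_nonneg (by positivity)).2 fun i => ?_
  refine (hmain i (fun j => u j i) fun k => hu k i).trans ?_
  have hCi : C i ≤ ∑ i, C i := Finset.single_le_sum (fun j _ => (hC j).le) (Finset.mem_univ i)
  gcongr
  linarith
end

section
/- (Local unbiasedness.) Let (Ω, ℱ, P) be a probability space and X_s an ℝ^D-valued random variable. Under the setup of the (n+1)-th order local approximation, for each ω let λ ↦ x_λ(ω) be the exact ODE solution with x_{λ_s}(ω) = X_s(ω), defined on an interval containing the points λ_{i_n} < … < λ_{i_1}, λ_s and λ_t, and let x̂_t(ω) be the (n+1)-th order local approximation computed from the exact values g(λ_{i_k})(ω) (k = 1,…,n) and g(λ_s)(ω) along that trajectory. Assume all quantities below are integrable and that for every τ in the interval, E[ f′(x_τ, τ) − s(τ)·f(x_τ, τ) − b(τ) ] = 0, where f′ denotes the total derivative of f along the trajectory (this is the first-order optimality condition characterizing the optimal empirical model statistics s*, b*). Then E[ x̂_t − x_{λ_t} ] = 0. -/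
/-!
Fix a coordinate and write `h ω r = f′ - s·f - b` along the trajectory `ω`, `S v = ∫_{λ_s}^v s`.

* Along a trajectory, `g` has derivative `e^{-S}·h`.
* With `E = e^{∫(l+s)}`, `B = ∫ e^{-S} b` and `K v = ∫_v^{λ_t} E`, the function
  `Ψ v = e^{∫l} x/α + ∫_{λ_s}^v E·B + g(λ_s) ∫_{λ_s}^v E - K v·(g(v) - g(λ_s))`
  has derivative `-K·e^{-S}·h`, and `K λ_t = 0`, so `Ψ λ_t - Ψ λ_s` is, up to the factor
  `α(λ_t) e^{-∫l}` and the divided-difference terms, the error `x_{λ_t} - x̂_t`.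

By Fubini, an increment of a process whose derivative is a deterministic continuous multiple of `h`
has mean zero (`integral_increment_eq_zero`), because `E[h(·, r)] = 0` for every `r`. The first
point then shows that the right-hand side of the Vandermonde system has mean zero, so its solution
has mean zero (`eq_zero_of_vandermonde`); the second disposes of the rest of the error.
-/

open MeasureTheory Set

/-- If every path of `Φ` has derivative `w r * H ω r` with `w` deterministic and continuous, and
`H` has mean zero at each time, then increments of `Φ` have mean zero: for almost every path the
increment is the integral of the derivative, and Fubini exchanges it with the expectation. -/
lemma integral_increment_eq_zero {Ω : Type*} [MeasurableSpace Ω] (P : Measure Ω)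
    [IsProbabilityMeasure P] {aJ bJ p q : ℝ} (hp : p ∈ Icc aJ bJ) (hq : q ∈ Icc aJ bJ)
    (hpq : p ≤ q) (H Φ : Ω → ℝ → ℝ) (w : ℝ → ℝ) (hw : Continuous w)
    (hΦ : ∀ ω, ∀ r ∈ Icc aJ bJ, HasDerivWithinAt (Φ ω) (w r * H ω r) (Icc aJ bJ) r)
    (hH : Integrable (fun z : Ω × ℝ => H z.1 z.2) (P.prod (volume.restrict (Icc aJ bJ))))
    (hmean : ∀ r ∈ Icc aJ bJ, ∫ ω, H ω r ∂P = 0) :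
    ∫ ω, (Φ ω q - Φ ω p) ∂P = 0 := by
  have hsub : Ioc p q ⊆ Icc aJ bJ := fun r hr => ⟨hp.1.trans hr.1.le, hr.2.trans hq.2⟩
  have hsub' : Icc p q ⊆ Icc aJ bJ := fun r hr => ⟨hp.1.trans hr.1, hr.2.trans hq.2⟩
  have hH' : Integrable (fun z : Ω × ℝ => H z.1 z.2) (P.prod (volume.restrict (Ioc p q))) :=
    hH.mono_measure (Measure.prod_mono le_rfl (Measure.restrict_mono hsub le_rfl))
  obtain ⟨C, hC⟩ := (isCompact_Icc (a := p) (b := q)).exists_bound_of_continuousOn hw.continuousOn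
  have hwH : Integrable (fun z : Ω × ℝ => w z.2 * H z.1 z.2)
      (P.prod (volume.restrict (Ioc p q))) := by
    refine hH'.bdd_mul (c := C) (hw.measurable.comp measurable_snd).aestronglyMeasurable ?_
    have : P.prod (volume.restrict (Ioc p q))
        = (P.prod volume).restrict (univ ×ˢ Ioc p q) := by
      rw [← Measure.prod_restrict, Measure.restrict_univ]
    rw [this]
    refine ae_restrict_of_forall_mem (MeasurableSet.univ.prod measurableSet_Ioc) ?_
    intro z hz
    exact hC _ (Ioc_subset_Icc_self hz.2)
  have hftc : ∀ᵐ ω ∂P, Φ ω q - Φ ω p = ∫ r in Ioc p q, w r * H ω r := by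
    filter_upwards [hwH.prod_right_ae] with ω hω
    rw [← intervalIntegral.integral_of_le hpq]
    refine (intervalIntegral.integral_eq_sub_of_hasDerivAt_of_le hpq ?_ ?_ ?_).symm
    · exact fun r hr => ((hΦ ω r (hsub' hr)).continuousWithinAt).mono hsub'
    · intro r hr
      exact (hΦ ω r (hsub' (Ioo_subset_Icc_self hr))).hasDerivAt
        (Icc_mem_nhds (hp.1.trans_lt hr.1) (hr.2.trans_le hq.2))
    · exact (intervalIntegrable_iff_integrableOn_Ioc_of_le hpq).2 hω
  rw [integral_congr_ae hftc, integral_integral_swap hwH]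
  refine setIntegral_eq_zero_of_forall_eq_zero fun r hr => ?_
  rw [integral_const_mul, hmean r (hsub hr), mul_zero]

/-- The homogeneous system with matrix `d_k ^ (j + 1)`, for distinct nonzero nodes `d_k`, has only
the zero solution. -/
lemma eq_zero_of_vandermonde {n : ℕ} (d : Fin n → ℝ) (hd : Function.Injective d)
    (hd0 : ∀ k, d k ≠ 0) (c : Fin n → ℝ)
    (h : ∀ k, ∑ j : Fin n, d k ^ ((j : ℕ) + 1) * c j = 0) : c = 0 := by
  refine Matrix.eq_zero_of_mulVec_eq_zero (Matrix.det_vandermonde_ne_zero_iff.2 hd) ?_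
  funext k
  have hk := h k
  simp only [pow_succ', mul_assoc, ← Finset.mul_sum] at hk
  simpa [Matrix.mulVec, dotProduct, Matrix.vandermonde_apply] using
    (mul_eq_zero.1 hk).resolve_left (hd0 k)


/-- **Local unbiasedness of the `(n+1)`-th order local approximation (Theorem 3.2).**
If, for every `τ`, the optimality condition `E[ f′(x_τ,τ) − s(τ)·f(x_τ,τ) − b(τ) ] = 0`
characterizing the optimal empirical model statistics holds along the random exact
trajectories, then the `(n+1)`-th order local approximation is unbiased:
`E[ x̂_t − x_{λ_t} ] = 0`. -/
theorem dpm_solver_v3_local_unbiasedness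
    {Ω : Type*} [MeasurableSpace Ω] (P : Measure Ω) [IsProbabilityMeasure P]
    (D n : ℕ) (hD : 1 ≤ D)
    -- the interval `[aJ, bJ]` containing all the points, the points λ_{i_n} < … < λ_{i_1} < λ_s < λ_t
    (aJ bJ ls lt : ℝ) (lam : Fin n → ℝ)
    (hord : ∀ k k' : Fin n, k < k' → lam k' < lam k)
    (hlam_lt : ∀ k, lam k < ls) (hst : ls < lt)
    (hmem : ∀ k, lam k ∈ Set.Icc aJ bJ) (hlsJ : ls ∈ Set.Icc aJ bJ) (hltJ : lt ∈ Set.Icc aJ bJ)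
    (α α' : ℝ → ℝ) (hαpos : ∀ u, 0 < α u)
    (hα : ∀ u, HasDerivAt α (α' u) u) (hα' : Continuous α')
    (l s b : ℝ → Fin D → ℝ) (hl : Continuous l) (hs : Continuous s) (hb : Continuous b)
    (f : (Fin D → ℝ) → ℝ → Fin D → ℝ)
    -- the random initial value and the exact trajectories passing through it
    (Xs : Ω → Fin D → ℝ) (x : Ω → ℝ → Fin D → ℝ) (hXs : ∀ ω, x ω ls = Xs ω)
    (hx : ∀ ω, ∀ u ∈ Set.Icc aJ bJ, ∀ i : Fin D,
      HasDerivWithinAt (fun v => x ω v i)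
        ((α' u / α u - l u i) * x ω u i - α u * f (x ω u) u i) (Set.Icc aJ bJ) u)
    -- the generalized parameterization `g`
    (g : (Fin D → ℝ) → ℝ → Fin D → ℝ)
    (hgdef : ∀ xv u i, g xv u i = Real.exp (-(∫ τ in ls..u, s τ i)) * f xv u i
        - ∫ rr in ls..u, Real.exp (-(∫ τ in ls..rr, s τ i)) * b rr i)
    -- `f1 ω τ` is the total derivative of `f` along the trajectory `ω` at time `τ`
    (f1 : Ω → ℝ → Fin D → ℝ)
    (hf1 : ∀ ω, ∀ u ∈ Set.Icc aJ bJ, ∀ i : Fin D,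
      HasDerivWithinAt (fun v => f (x ω v) v i) (f1 ω u i) (Set.Icc aJ bJ) u)
    -- integrability of all relevant quantities
    (hint1 : ∀ u ∈ Set.Icc aJ bJ, ∀ i : Fin D,
      Integrable (fun ω => f1 ω u i - s u i * f (x ω u) u i - b u i) P)
    (hint2 : ∀ i : Fin D, Integrable
      (fun p : Ω × ℝ => f1 p.1 p.2 i - s p.2 i * f (x p.1 p.2) p.2 i - b p.2 i)
      (P.prod (volume.restrict (Set.Icc aJ bJ))))
    (hint3 : ∀ k : Fin n, ∀ i : Fin D, Integrable (fun ω => g (x ω (lam k)) (lam k) i) P)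
    (hint4 : ∀ i : Fin D, Integrable (fun ω => g (x ω ls) ls i) P)
    (hint5 : ∀ i : Fin D, Integrable (fun ω => x ω ls i) P)
    (hint6 : ∀ i : Fin D, Integrable (fun ω => x ω lt i) P)
    -- the first-order optimality condition of the empirical model statistics `s`, `b`
    (hmean : ∀ u ∈ Set.Icc aJ bJ, ∀ i : Fin D,
      (∫ ω, (f1 ω u i - s u i * f (x ω u) u i - b u i) ∂P) = 0)
    -- the `(n+1)`-th order local approximation `x̂_t`, computed from the exact values
    -- `g(x_{λ_{i_k}}, λ_{i_k})` and `g(x_{λ_s}, λ_s)` via the Vandermonde-type system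
    (u : Ω → Fin n → Fin D → ℝ) (xhat : Ω → Fin D → ℝ)
    (hu : ∀ (j : Fin n) (i : Fin D), Integrable (fun ω => u ω j i) P)
    (hsys : ∀ ω, ∀ k : Fin n, ∀ i : Fin D,
      (∑ j : Fin n, (lam k - ls) ^ ((j : ℕ) + 1) * u ω j i)
        = g (x ω (lam k)) (lam k) i - g (x ω ls) ls i)
    (hxhat : ∀ ω, ∀ i : Fin D,
      xhat ω i = α lt * Real.exp (-(∫ τ in ls..lt, l τ i)) *
        (x ω ls i / α ls
          - (∫ v in ls..lt, Real.exp (∫ τ in ls..v, l τ i + s τ i) *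
              (∫ rr in ls..v, Real.exp (-(∫ τ in ls..rr, s τ i)) * b rr i))
          - g (x ω ls) ls i * (∫ v in ls..lt, Real.exp (∫ τ in ls..v, l τ i + s τ i))
          - ∑ j : Fin n, (Nat.factorial ((j : ℕ) + 1) : ℝ) * u ω j i *
              ∫ v in ls..lt, Real.exp (∫ τ in ls..v, l τ i + s τ i) *
                (v - ls) ^ ((j : ℕ) + 1) / (Nat.factorial ((j : ℕ) + 1) : ℝ)))
    (hxhatInt : ∀ i : Fin D, Integrable (fun ω => xhat ω i - x ω lt i) P) :
    ∀ i : Fin D, (∫ ω, (xhat ω i - x ω lt i) ∂P) = 0 := by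
  intro i
  have hli : Continuous fun v => l v i := (continuous_apply i).comp hl
  have hsi : Continuous fun v => s v i := (continuous_apply i).comp hs
  have hbi : Continuous fun v => b v i := (continuous_apply i).comp hb
  have prim : ∀ (φ : ℝ → ℝ), Continuous φ → ∀ v, HasDerivAt (fun v => ∫ τ in ls..v, φ τ) (φ v) v :=
    fun φ hφ v => intervalIntegral.integral_hasDerivAt_right (hφ.intervalIntegrable _ _)
      (hφ.stronglyMeasurableAtFilter _ _) hφ.continuousAt
  have primc : ∀ (φ : ℝ → ℝ), Continuous φ → Continuous (fun v => ∫ τ in ls..v, φ τ) :=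
    fun φ hφ => continuous_iff_continuousAt.2 fun v => (prim φ hφ v).continuousAt
  set S : ℝ → ℝ := fun v => ∫ τ in ls..v, s τ i with hS
  set L : ℝ → ℝ := fun v => ∫ τ in ls..v, l τ i with hL
  have hSd : ∀ v, HasDerivAt S (s v i) v := prim _ hsi
  have hLd : ∀ v, HasDerivAt L (l v i) v := prim _ hli
  have hSc : Continuous S := primc _ hsi
  have hLc : Continuous L := primc _ hli
  have hLS : ∀ v, (∫ τ in ls..v, l τ i + s τ i) = L v + S v := fun v =>
    intervalIntegral.integral_add (hli.intervalIntegrable _ _) (hsi.intervalIntegrable _ _)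
  set B : ℝ → ℝ := fun v => ∫ rr in ls..v, Real.exp (-(S rr)) * b rr i with hB
  have hBd : ∀ v, HasDerivAt B (Real.exp (-(S v)) * b v i) v := prim _ (by fun_prop)
  have hBc : Continuous B := primc _ (by fun_prop)
  set E : ℝ → ℝ := fun v => Real.exp (L v + S v) with hE
  have hEc : Continuous E := by fun_prop
  set IE : ℝ → ℝ := fun v => ∫ r in ls..v, E r with hIE
  set IEB : ℝ → ℝ := fun v => ∫ r in ls..v, E r * B r with hIEB
  have hIEd : ∀ v, HasDerivAt IE (E v) v := prim _ hEc
  have hIEc : Continuous IE := primc _ hEc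
  have hIEBd : ∀ v, HasDerivAt IEB (E v * B v) v := prim _ (hEc.mul hBc)
  have hS0 : S ls = 0 := intervalIntegral.integral_same
  have hL0 : L ls = 0 := intervalIntegral.integral_same
  have hIE0 : IE ls = 0 := intervalIntegral.integral_same
  have hIEB0 : IEB ls = 0 := intervalIntegral.integral_same
  have hg : ∀ xv v, g xv v i = Real.exp (-(S v)) * f xv v i - B v := fun xv v => hgdef xv v i
  set H : Ω → ℝ → ℝ := fun ω r => f1 ω r i - s r i * f (x ω r) r i - b r i with hH
  set G : Ω → ℝ → ℝ := fun ω v => g (x ω v) v i with hG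
  have hGd : ∀ ω, ∀ r ∈ Icc aJ bJ,
      HasDerivWithinAt (G ω) (Real.exp (-(S r)) * H ω r) (Icc aJ bJ) r := by
    intro ω r hr
    have h1 := (((hSd r).neg.exp.hasDerivWithinAt (s := Icc aJ bJ)).mul (hf1 ω r hr i)).sub
      (hBd r).hasDerivWithinAt
    refine (h1.congr_of_mem (fun v _ => hg _ _) hr).congr_deriv ?_
    simp only [hH, Pi.neg_apply]
    ring
  have hGmean : ∀ k, ∫ ω, (G ω (lam k) - G ω ls) ∂P = 0 := by
    intro k
    have h0 := integral_increment_eq_zero P (hmem k) hlsJ (hlam_lt k).le H G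
      (fun r => Real.exp (-(S r))) (by fun_prop) hGd (hint2 i) (fun r hr => hmean r hr i)
    rw [← neg_eq_zero, ← integral_neg]
    simpa using h0
  have humean : (fun j => ∫ ω, u ω j i ∂P) = 0 := by
    refine eq_zero_of_vandermonde (fun k => lam k - ls) ?_ ?_ _ ?_
    · have : StrictAnti lam := fun k k' h => hord k k' h
      exact fun k k' h => this.injective (sub_left_injective h)
    · exact fun k => (sub_neg.2 (hlam_lt k)).ne
    · intro k
      rw [← hGmean k]
      simp only [hG, ← hsys]
      rw [integral_finsetSum _ fun j _ => (hu j i).const_mul _]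
      simp only [integral_const_mul]
  -- `IE lt - IE v` is the tail `K v = ∫_v^{λ_t} E`.
  set Ψ : Ω → ℝ → ℝ := fun ω v => Real.exp (L v) * (x ω v i / α v) + IEB v + G ω ls * IE v
    - (IE lt - IE v) * (G ω v - G ω ls) with hΨ
  have hΨd : ∀ ω, ∀ r ∈ Icc aJ bJ,
      HasDerivWithinAt (Ψ ω) (-(IE lt - IE r) * Real.exp (-(S r)) * H ω r) (Icc aJ bJ) r := by
    intro ω r hr
    have hα0 := (hαpos r).ne'
    have h1 := ((hLd r).exp.hasDerivWithinAt (s := Icc aJ bJ)).mul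
      ((hx ω r hr i).div (hα r).hasDerivWithinAt hα0)
    have h2 := (((hIEd r).const_sub (IE lt)).hasDerivWithinAt (s := Icc aJ bJ)).mul
      ((hGd ω r hr).sub_const (G ω ls))
    have h3 := ((h1.add (hIEBd r).hasDerivWithinAt).add
      ((hIEd r).const_mul (G ω ls)).hasDerivWithinAt).sub h2
    refine h3.congr_deriv ?_
    have hfG : Real.exp (L r) * f (x ω r) r i = E r * (G ω r + B r) := by
      simp only [hG, hg, hE]
      rw [Real.exp_add, Real.exp_neg]
      field_simp
      ring
    have hx' : Real.exp (L r) * l r i * (x ω r i / α r) + Real.exp (L r) *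
        ((((α' r / α r - l r i) * x ω r i - α r * f (x ω r) r i) * α r - x ω r i * α' r) / α r ^ 2)
        = -(E r * (G ω r + B r)) := by
      rw [← hfG]
      field_simp
      ring
    rw [Pi.div_apply, hx']
    ring
  have hΨmean := integral_increment_eq_zero P hlsJ hltJ hst.le H Ψ
    (fun r => -(IE lt - IE r) * Real.exp (-(S r))) (by fun_prop) hΨd (hint2 i)
    (fun r hr => hmean r hr i)
  set c : Fin n → ℝ := fun j => (Nat.factorial ((j : ℕ) + 1) : ℝ) *
    ∫ v in ls..lt, E v * (v - ls) ^ ((j : ℕ) + 1) / (Nat.factorial ((j : ℕ) + 1) : ℝ) with hc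
  have herr : ∀ ω, xhat ω i - x ω lt i = -(α lt * Real.exp (-(L lt))) *
      ((Ψ ω lt - Ψ ω ls) + ∑ j, c j * u ω j i) := by
    intro ω
    have hα0 := (hαpos lt).ne'
    have hsum : ∑ j : Fin n, (Nat.factorial ((j : ℕ) + 1) : ℝ) * u ω j i *
        (∫ v in ls..lt, E v * (v - ls) ^ ((j : ℕ) + 1) / (Nat.factorial ((j : ℕ) + 1) : ℝ))
        = ∑ j, c j * u ω j i := Finset.sum_congr rfl fun j _ => by simp only [hc]; ring
    have hxh := hxhat ω i
    simp only [hLS] at hxh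
    change xhat ω i = α lt * Real.exp (-(L lt)) * (x ω ls i / α ls - IEB lt - G ω ls * IE lt
      - ∑ j : Fin n, (Nat.factorial ((j : ℕ) + 1) : ℝ) * u ω j i *
        (∫ v in ls..lt, E v * (v - ls) ^ ((j : ℕ) + 1) / (Nat.factorial ((j : ℕ) + 1) : ℝ))) at hxh
    rw [hsum] at hxh
    have hxt : x ω lt i = α lt * Real.exp (-(L lt)) * (Real.exp (L lt) * (x ω lt i / α lt)) := by
      rw [Real.exp_neg]
      field_simp
    have hΨt : Ψ ω lt = Real.exp (L lt) * (x ω lt i / α lt) + IEB lt + G ω ls * IE lt := by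
      simp [hΨ]
    have hΨs : Ψ ω ls = x ω ls i / α ls := by
      simp [hΨ, hL0, hIE0, hIEB0]
    rw [hxh, hΨt, hΨs]
    linear_combination -hxt
  have hsumInt : Integrable (fun ω => ∑ j, c j * u ω j i) P :=
    integrable_finsetSum _ fun j _ => (hu j i).const_mul _
  have hΨInt : Integrable (fun ω => Ψ ω lt - Ψ ω ls) P := by
    have hC : -(α lt * Real.exp (-(L lt))) ≠ 0 :=
      neg_ne_zero.2 (mul_pos (hαpos lt) (Real.exp_pos _)).ne'
    have h1 := hxhatInt i
    simp only [herr] at h1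
    have h2 := ((integrable_const_mul_iff (IsUnit.mk0 _ hC) _).1 h1).sub hsumInt
    exact h2.congr (.of_forall fun ω => by simp)
  simp only [herr]
  rw [integral_const_mul, integral_add hΨInt hsumInt, hΨmean,
    integral_finsetSum _ fun j _ => (hu j i).const_mul _]
  have hj : ∀ j, ∫ ω, u ω j i ∂P = 0 := fun j => congrFun humean j
  simp [integral_const_mul, hj]
end

section
/- (Global order of convergence.) Fix n ≥ 0. Let α : ℝ → ℝ be positive and continuously differentiable, let l, s, b : ℝ → ℝ^D be continuous and bounded with n continuous derivatives, and let f : ℝ^D × ℝ → ℝ^D be such that: f(·, λ) is Lipschitz in its first argument uniformly in λ; the exact solution x of x′(λ) = (α̇/α − l)·x − α·f(x,λ) exists on [λ_0, λ_end]; and the generalized parameterization along exact trajectories is (n+1)-times continuously differentiable. Consider, for each M, timesteps λ_0 < λ_1 < … < λ_M = λ_end with maximal stepsize h := max_{1≤i≤M}(λ_i − λ_{i−1}) ≤ c/M for some fixed c > 0, and starting values x̂_0, …, x̂_n satisfying ‖x̂_i − x(λ_i)‖ ≤ C₀·h^{n+1}. For m > n define x̂_m by the (n+1)-th order multistep predictor: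 with base point λ_{m−1}, compute ĝ_ℓ := g-parameterization value at (x̂_ℓ, λ_ℓ) for ℓ = m−1−n, …, m−1 (using base point λ_{m−1} in the definition of g), solve the n×n Vandermonde-type system Σ_j (λ_{ℓ} − λ_{m−1})^j·(ĝ^{(j)}/j!) = ĝ_ℓ − ĝ_{m−1} for the derivative estimates, and set x̂_m := α(λ_m)·A(λ_{m−1},λ_m)·( x̂_{m−1}/α(λ_{m−1}) − ∫_{λ_{m−1}}^{λ_m} E_{λ_{m−1}}(λ)B_{λ_{m−1}}(λ)dλ − Σ_{k=0}^{n} ĝ^{(k)}·∫_{λ_{m−1}}^{λ_m} E_{λ_{m−1}}(λ)(λ−λ_{m−1})^k/k! dλ ). Assume the stepsize ratios (λ_{i} − λ_{i−1})/h are bounded above and below by fixed positive constants. Then there exists a constant C such that for all sufficiently large M, ‖ x̂_M − x(λ_M) ‖ ≤ C·h^{n+1}. -/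
/-!
The step rests on the following identity. Let `p` be the base point, `E` and `B` the weights of
the update, and `G` the parameterization along the exact trajectory. Variation of constants
(`exact_step`) writes the exact solution after one step as the update formula with integrand
`E * (B + G)`, and the predictor is the same formula with `G` replaced by the polynomial `q` of
degree at most `n` that interpolates the computed values at the last `n + 1` nodes
(`numeric_step`). After dividing by `α` and multiplying by `exp (∫ l)`, the error therefore changes
in one step exactly by a bounded multiple of `∫ E * (q - G)` (`error_step`).

To bound `q - G`, compare both with a Taylor polynomial `P` of `G` at the leftmost node. The
remainder `G - P` is `O(h^(n+1))`, uniformly in the base point, because changing the base point is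
an affine map (`gpar_rebase`, `exists_uniform_taylor_gpar`). The polynomial `q - P` is small at the
nodes by the Lipschitz condition, hence small on the next step by the Lagrange formula, whose
basis polynomials are bounded since the stepsize ratios are (`abs_eval_le_of_nodes`). Thus each
step adds at most `K * h * (W + h^(n+1))` to the error, where `W` bounds all earlier errors, and
`multistep_gronwall` together with `h * M ≤ c` concludes.
-/

open MeasureTheory Set

/-- The generalized parameterization `g` with base point `p`:
`g_p(x, u) := exp(−∫_p^u s)·f(x, u) − ∫_p^u exp(−∫_p^r s)·b(r) dr` (element-wise). -/
noncomputable def gpar (D : ℕ) (s b : ℝ → Fin D → ℝ)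
    (f : (Fin D → ℝ) → ℝ → Fin D → ℝ) (p : ℝ) (xv : Fin D → ℝ) (u : ℝ) :
    Fin D → ℝ :=
  fun i => Real.exp (-(∫ τ in p..u, s τ i)) * f xv u i
    - ∫ r in p..u, Real.exp (-(∫ τ in p..r, s τ i)) * b r i

/-! ### Interpolation and Taylor expansion -/

/-- Stability of interpolation: a polynomial of degree at most `n` is controlled at a nearby point
by its values at `n + 1` nodes whose mutual distances are at least `ρ * h`. -/
lemma abs_eval_le_of_nodes (n : ℕ) (y : ℕ → ℝ) (v ρ h δ : ℝ) (hρ : 0 < ρ) (hh : 0 < h)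
    (sep : ∀ j ≤ n, ∀ k ≤ n, j ≠ k → ρ * h ≤ |y j - y k|)
    (near : ∀ k ≤ n, |v - y k| ≤ (n + 1) * h)
    (P : Polynomial ℝ) (hP : P.natDegree ≤ n) (hδ : ∀ k ≤ n, |P.eval (y k)| ≤ δ) :
    |P.eval v| ≤ (n + 1) * ((n + 1) / ρ) ^ n * δ := by
  have hρh : 0 < ρ * h := mul_pos hρ hh
  have hδ0 : 0 ≤ δ := (abs_nonneg _).trans (hδ 0 (Nat.zero_le _))
  have hinj : Set.InjOn y (Finset.range (n + 1) : Finset ℕ) := by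
    intro j hj k hk hjk
    by_contra hne
    have := sep j (by simpa [Nat.lt_succ_iff] using hj) k (by simpa [Nat.lt_succ_iff] using hk) hne
    rw [hjk, sub_self, abs_zero] at this
    linarith
  have hdeg : P.degree < ((Finset.range (n + 1)).card : WithBot ℕ) := by
    rw [Finset.card_range]
    exact Polynomial.degree_le_natDegree.trans_lt (by exact_mod_cast Nat.lt_succ_of_le hP)
  rw [Lagrange.eq_interpolate hinj hdeg, Lagrange.interpolate_apply, Polynomial.eval_finsetSum]
  refine (Finset.abs_sum_le_sum_abs _ _).trans ?_
  have hterm : ∀ k ∈ Finset.range (n + 1),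
      |Polynomial.eval v (Polynomial.C (Polynomial.eval (y k) P) *
        Lagrange.basis (Finset.range (n + 1)) y k)| ≤ ((n + 1) / ρ) ^ n * δ := by
    intro k hk
    have hkn : k ≤ n := by simpa [Nat.lt_succ_iff] using hk
    rw [Polynomial.eval_mul, Polynomial.eval_C, abs_mul, mul_comm]
    refine mul_le_mul ?_ (hδ k hkn) (abs_nonneg _) (by positivity)
    rw [Lagrange.basis, Polynomial.eval_prod, Finset.abs_prod]
    calc _ ≤ ∏ _j ∈ (Finset.range (n + 1)).erase k, (((n : ℝ) + 1) / ρ) := by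
          refine Finset.prod_le_prod (fun _ _ => abs_nonneg _) ?_
          intro j hj
          rw [Finset.mem_erase, Finset.mem_range] at hj
          have hjn : j ≤ n := by omega
          have h1 := sep k hkn j hjn (Ne.symm hj.1)
          have h2 := near j hjn
          rw [Lagrange.basisDivisor, Polynomial.eval_mul, Polynomial.eval_C, abs_mul, abs_inv]
          simp only [Polynomial.eval_sub, Polynomial.eval_X, Polynomial.eval_C]
          calc |y k - y j|⁻¹ * |v - y j| ≤ (ρ * h)⁻¹ * ((n + 1) * h) := by gcongr
            _ = (n + 1) / ρ := by field_simp
      _ = _ := by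
          rw [Finset.prod_const, Finset.card_erase_of_mem hk, Finset.card_range]
          simp
  calc _ ≤ ∑ _k ∈ Finset.range (n + 1), ((n + 1) / ρ) ^ n * δ := Finset.sum_le_sum hterm
    _ = _ := by rw [Finset.sum_const, Finset.card_range]; simp; ring

/-- Taylor expansion at a varying left end point, with a remainder constant independent of it. -/
lemma exists_uniform_taylor (n : ℕ) (G : ℝ → ℝ) (a b : ℝ) (hab : a < b)
    (hG : ContDiffOn ℝ (n + 1 : ℕ∞) G (Icc a b)) :
    ∃ K : ℝ, 0 ≤ K ∧ ∀ p ∈ Icc a b, ∃ P : Polynomial ℝ, P.natDegree ≤ n ∧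
      ∀ v ∈ Icc p b, |G v - P.eval v| ≤ K * (v - p) ^ (n + 1) := by
  have hud := uniqueDiffOn_Icc hab
  have hcont : ContinuousOn (iteratedDerivWithin (n + 1) G (Icc a b)) (Icc a b) :=
    hG.continuousOn_iteratedDerivWithin (by norm_cast) hud
  obtain ⟨K, hK⟩ := isCompact_Icc.exists_bound_of_continuousOn hcont
  have hK0 : 0 ≤ K := (norm_nonneg _).trans (hK a (left_mem_Icc.2 hab.le))
  refine ⟨K, hK0, fun p hp => ?_⟩
  rcases hp.2.eq_or_lt with rfl | hpb
  · refine ⟨Polynomial.C (G p), by simp, fun v hv => ?_⟩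
    have : v = p := le_antisymm hv.2 hv.1
    subst this
    simp
  · have hsub : Icc p b ⊆ Icc a b := Icc_subset_Icc_left hp.1
    have hud' := uniqueDiffOn_Icc hpb
    refine ⟨∑ k ∈ Finset.range (n + 1),
      Polynomial.C ((k.factorial : ℝ)⁻¹ * iteratedDerivWithin k G (Icc p b) p) *
        (Polynomial.X - Polynomial.C p) ^ k, ?_, fun v hv => ?_⟩
    · refine Polynomial.natDegree_sum_le_of_forall_le _ _ fun k hk => ?_
      refine (Polynomial.natDegree_C_mul_le _ _).trans ?_
      rw [Polynomial.natDegree_pow, Polynomial.natDegree_X_sub_C]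
      have := Finset.mem_range.1 hk
      omega
    · have hG' : ContDiffOn ℝ ((n : WithTop ℕ∞) + 1) G (Icc p b) := by
        refine (hG.mono hsub).of_le ?_
        norm_cast
      have hbd := taylor_mean_remainder_bound (C := K) hpb.le hG' hv (fun y hy => by
        have hnn : ContDiffOn ℝ ((n + 1 : ℕ) : WithTop ℕ∞) G (Icc a b) :=
          hG.of_le (by norm_cast)
        have := iteratedFDerivWithin_subset hsub hud' hud hnn hy
        rw [iteratedDerivWithin, this, ← iteratedDerivWithin]
        exact hK y (hsub hy))
      rw [taylor_within_apply, Real.norm_eq_abs] at hbd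
      have heq : Polynomial.eval v (∑ k ∈ Finset.range (n + 1),
          Polynomial.C ((k.factorial : ℝ)⁻¹ * iteratedDerivWithin k G (Icc p b) p) *
            (Polynomial.X - Polynomial.C p) ^ k) =
          ∑ k ∈ Finset.range (n + 1),
            ((k.factorial : ℝ)⁻¹ * (v - p) ^ k) • iteratedDerivWithin k G (Icc p b) p := by
        rw [Polynomial.eval_finsetSum]
        refine Finset.sum_congr rfl fun k _ => ?_
        simp
        ring
      rw [heq]
      refine hbd.trans (div_le_self ?_ ?_)
      · have : 0 ≤ v - p := sub_nonneg.2 hv.1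
        positivity
      · exact_mod_cast Nat.succ_le_of_lt n.factorial_pos

/-- Changing the base point of the parameterization is an affine map whose coefficients depend on
the base points only; smoothness bounds at one base point therefore serve all of them. -/
lemma gpar_rebase (D : ℕ) (s b : ℝ → Fin D → ℝ) (f : (Fin D → ℝ) → ℝ → Fin D → ℝ)
    (hs : Continuous s) (hb : Continuous b) (q p : ℝ) (i : Fin D) :
    ∃ κ : ℝ, ∀ xv u, gpar D s b f p xv u i =
      Real.exp (∫ τ in q..p, s τ i) * gpar D s b f q xv u i + κ := by
  have hsi : Continuous fun τ => s τ i := (continuous_apply i).comp hs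
  have hbi : Continuous fun τ => b τ i := (continuous_apply i).comp hb
  have hint : ∀ a c, IntervalIntegrable (fun τ => s τ i) volume a c :=
    fun a c => hsi.intervalIntegrable a c
  have hprim : Continuous fun r => ∫ τ in q..r, s τ i :=
    intervalIntegral.continuous_primitive hint q
  have hcont : Continuous fun r => Real.exp (-(∫ τ in q..r, s τ i)) * b r i := by fun_prop
  have hexp : ∀ r, Real.exp (-(∫ τ in p..r, s τ i)) =
      Real.exp (∫ τ in q..p, s τ i) * Real.exp (-(∫ τ in q..r, s τ i)) := by
    intro r
    rw [← Real.exp_add, ← intervalIntegral.integral_add_adjacent_intervals (hint q p) (hint p r)]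
    congr 1
    ring
  refine ⟨Real.exp (∫ τ in q..p, s τ i) *
    ∫ r in q..p, Real.exp (-(∫ τ in q..r, s τ i)) * b r i, fun xv u => ?_⟩
  simp only [gpar]
  simp_rw [hexp, mul_assoc]
  rw [intervalIntegral.integral_const_mul,
    ← intervalIntegral.integral_add_adjacent_intervals
      (hcont.intervalIntegrable q p) (hcont.intervalIntegrable p u)]
  ring

/-- Along the exact solution, the parameterization admits Taylor polynomials with a remainder
constant that is uniform in the base point, the expansion point and the coordinate. -/
lemma exists_uniform_taylor_gpar (D n : ℕ) (s b : ℝ → Fin D → ℝ)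
    (f : (Fin D → ℝ) → ℝ → Fin D → ℝ) (hs : Continuous s) (hb : Continuous b) (Cs : ℝ)
    (hsB : ∀ u i, |s u i| ≤ Cs) (l0 lend : ℝ) (hl0 : l0 < lend) (x : ℝ → Fin D → ℝ)
    (hG : ContDiffOn ℝ (n + 1 : ℕ∞) (fun u => gpar D s b f l0 (x u) u) (Icc l0 lend)) :
    ∃ K : ℝ, 0 ≤ K ∧ ∀ p ∈ Icc l0 lend, ∀ a ∈ Icc l0 lend, ∀ i,
      ∃ P : Polynomial ℝ, P.natDegree ≤ n ∧
        ∀ v ∈ Icc a lend, |gpar D s b f p (x v) v i - P.eval v| ≤ K * (v - a) ^ (n + 1) := by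
  have h1 := fun i => exists_uniform_taylor n (fun u => gpar D s b f l0 (x u) u i) l0 lend hl0
    (contDiffOn_pi.1 hG i)
  choose K hK0 hK using h1
  have hKs : 0 ≤ ∑ i, K i := Finset.sum_nonneg fun i _ => hK0 i
  refine ⟨Real.exp (Cs * (lend - l0)) * ∑ i, K i, by positivity, fun p hp a ha i => ?_⟩
  obtain ⟨κ, hκ⟩ := gpar_rebase D s b f hs hb l0 p i
  obtain ⟨P, hP, hPb⟩ := hK i a ha
  refine ⟨Polynomial.C (Real.exp (∫ τ in l0..p, s τ i)) * P + Polynomial.C κ, ?_, fun v hv => ?_⟩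
  · rw [Polynomial.natDegree_add_C]
    exact (Polynomial.natDegree_C_mul_le _ _).trans hP
  · have hS : (∫ τ in l0..p, s τ i) ≤ Cs * (lend - l0) := by
      have h2 := intervalIntegral.norm_integral_le_of_norm_le_const
        (a := l0) (b := p) (f := fun τ => s τ i) (C := Cs) (fun τ _ => hsB τ i)
      have h3 : 0 ≤ Cs := (abs_nonneg _).trans (hsB 0 i)
      rw [abs_of_nonneg (sub_nonneg.2 hp.1)] at h2
      refine (le_abs_self _).trans (h2.trans ?_)
      have := hp.2
      gcongr
    have h4 : 0 ≤ v - a := sub_nonneg.2 hv.1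
    have h5 : K i ≤ ∑ i, K i := Finset.single_le_sum (fun j _ => hK0 j) (Finset.mem_univ i)
    rw [hκ]
    simp only [Polynomial.eval_add, Polynomial.eval_mul, Polynomial.eval_C]
    rw [add_sub_add_right_eq_sub, ← mul_sub, abs_mul, Real.abs_exp, mul_assoc]
    calc _ ≤ Real.exp (Cs * (lend - l0)) * (K i * (v - a) ^ (n + 1)) := by
          gcongr
          exact hPb v hv
      _ ≤ _ := by gcongr

/-! ### Variation of constants for the exact solution -/

/-- Variation-of-constants formula for the exact solution. -/
lemma exact_step (D : ℕ) (α α' : ℝ → ℝ) (hαpos : ∀ u, 0 < α u)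
    (hα : ∀ u, HasDerivAt α (α' u) u)
    (l s b : ℝ → Fin D → ℝ) (hl : Continuous l) (hs : Continuous s) (hb : Continuous b)
    (f : (Fin D → ℝ) → ℝ → Fin D → ℝ) (l0 lend : ℝ) (x : ℝ → Fin D → ℝ) (i : Fin D)
    (hx : ∀ u ∈ Set.Icc l0 lend,
      HasDerivWithinAt (fun v => x v i)
        ((α' u / α u - l u i) * x u i - α u * f (x u) u i) (Set.Icc l0 lend) u)
    (p w : ℝ) (hp : l0 ≤ p) (hpw : p ≤ w) (hw : w ≤ lend)
    (hG : ContinuousOn (fun u => gpar D s b f p (x u) u i) (Icc l0 lend)) :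
    x w i / α w * Real.exp (∫ τ in p..w, l τ i) = x p i / α p -
      ∫ v in p..w, Real.exp (∫ τ in p..v, l τ i + s τ i) *
        ((∫ r in p..v, Real.exp (-(∫ τ in p..r, s τ i)) * b r i) + gpar D s b f p (x v) v i) := by
  have hli : Continuous fun τ => l τ i := (continuous_apply i).comp hl
  have hsi : Continuous fun τ => s τ i := (continuous_apply i).comp hs
  have hbi : Continuous fun τ => b τ i := (continuous_apply i).comp hb
  have hsub : Icc p w ⊆ Icc l0 lend := Icc_subset_Icc hp hw
  have hαc : Continuous α := continuous_iff_continuousAt.2 fun u => (hα u).continuousAt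
  have hL : Continuous fun v => ∫ τ in p..v, l τ i :=
    intervalIntegral.continuous_primitive (fun a c => hli.intervalIntegrable a c) p
  have hS : Continuous fun v => ∫ τ in p..v, s τ i :=
    intervalIntegral.continuous_primitive (fun a c => hsi.intervalIntegrable a c) p
  have hLS : Continuous fun v => ∫ τ in p..v, l τ i + s τ i :=
    intervalIntegral.continuous_primitive
      (fun a c => (hli.add hsi).intervalIntegrable a c) p
  have hBc : Continuous fun r => Real.exp (-(∫ τ in p..r, s τ i)) * b r i := by fun_prop
  have hB : Continuous fun v => ∫ r in p..v, Real.exp (-(∫ τ in p..r, s τ i)) * b r i :=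
    intervalIntegral.continuous_primitive (fun a c => hBc.intervalIntegrable a c) p
  have key := intervalIntegral.integral_eq_sub_of_hasDerivAt_of_le
    (f := fun v => x v i / α v * Real.exp (∫ τ in p..v, l τ i))
    (f' := fun v => -(Real.exp (∫ τ in p..v, l τ i + s τ i) *
        ((∫ r in p..v, Real.exp (-(∫ τ in p..r, s τ i)) * b r i) + gpar D s b f p (x v) v i)))
    hpw ?_ ?_ ?_
  · simp only [intervalIntegral.integral_same, Real.exp_zero, mul_one,
      intervalIntegral.integral_neg] at key
    linarith
  · have hxc : ContinuousOn (fun v => x v i) (Icc p w) := fun u hu =>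
      ((hx u (hsub hu)).continuousWithinAt).mono hsub
    refine ContinuousOn.mul (hxc.div hαc.continuousOn fun u _ => (hαpos u).ne') ?_
    exact (Real.continuous_exp.comp hL).continuousOn
  · intro u hu
    have hx' : HasDerivAt (fun v => x v i)
        ((α' u / α u - l u i) * x u i - α u * f (x u) u i) u :=
      (hx u (hsub (Ioo_subset_Icc_self hu))).hasDerivAt
        (Icc_mem_nhds (hp.trans_lt hu.1) (hu.2.trans_le hw))
    have hl' : HasDerivAt (fun v => ∫ τ in p..v, l τ i) (l u i) u :=
      intervalIntegral.integral_hasDerivAt_right (hli.intervalIntegrable _ _)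
        hli.stronglyMeasurable.stronglyMeasurableAtFilter hli.continuousAt
    have hd := (hx'.div (hα u) (hαpos u).ne').mul hl'.exp
    refine hd.congr_deriv ?_
    rw [intervalIntegral.integral_add (hli.intervalIntegrable _ _) (hsi.intervalIntegrable _ _)]
    have hes : Real.exp (∫ τ in p..u, s τ i) ≠ 0 := (Real.exp_pos _).ne'
    have hα0 := (hαpos u).ne'
    simp only [gpar, Real.exp_add, Real.exp_neg, Pi.div_apply]
    field_simp
    ring
  · refine ContinuousOn.intervalIntegrable ?_
    rw [uIcc_of_le hpw]
    refine ContinuousOn.neg (ContinuousOn.mul (Real.continuous_exp.comp hLS).continuousOn ?_)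
    exact hB.continuousOn.add (hG.mono hsub)

/-! ### Discrete Grönwall inequality and mesh estimates -/

/-- Discrete Grönwall inequality for multistep recursions, in which a step may depend on all
earlier errors through their maximum. -/
lemma multistep_gronwall (w : ℕ → ℝ) (n M : ℕ) (K h δ C : ℝ) (hK : 0 ≤ K) (hh : 0 ≤ h)
    (hδ : 0 ≤ δ) (hC : 0 ≤ C) (h0 : ∀ m ≤ n, w m ≤ C * δ)
    (hstep : ∀ r, r + n + 1 ≤ M → ∀ W, (∀ j < r + n + 1, w j ≤ W) →
      w (r + n + 1) ≤ W + K * h * (W + δ)) :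
    ∀ m ≤ M, w m ≤ (1 + K * h) ^ m * ((C + 1) * δ) - δ := by
  have hKh : 0 ≤ K * h := mul_nonneg hK hh
  have hone : (1 : ℝ) ≤ 1 + K * h := by linarith
  have hCδ : 0 ≤ (C + 1) * δ := by positivity
  intro m
  induction m using Nat.strong_induction_on with
  | _ m ih =>
    intro hm
    by_cases hmn : m ≤ n
    · have h1 : 1 * ((C + 1) * δ) ≤ (1 + K * h) ^ m * ((C + 1) * δ) := by
        gcongr
        exact one_le_pow₀ hone
      have := h0 m hmn
      linarith
    · obtain ⟨r, rfl⟩ : ∃ r, m = r + n + 1 := ⟨m - n - 1, by omega⟩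
      have h2 := hstep r hm ((1 + K * h) ^ (r + n) * ((C + 1) * δ) - δ) (fun j hj => by
        have h3 := ih j hj (by omega)
        have h4 : (1 + K * h) ^ j * ((C + 1) * δ) ≤ (1 + K * h) ^ (r + n) * ((C + 1) * δ) := by
          gcongr
          omega
        linarith)
      refine h2.trans (le_of_eq ?_)
      rw [pow_succ (1 + K * h) (r + n)]
      ring

lemma mul_le_mesh (t : ℕ → ℝ) (M : ℕ) (c : ℝ) (h : ∀ m < M, c ≤ t (m + 1) - t m) (j d : ℕ)
    (hjd : j + d ≤ M) : d * c ≤ t (j + d) - t j := by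
  induction d with
  | zero => simp
  | succ d ih =>
    have h1 := ih (by omega)
    have h2 := h (j + d) (by omega)
    rw [← add_assoc]
    push_cast
    linarith

lemma mesh_le_mul (t : ℕ → ℝ) (M : ℕ) (c : ℝ) (h : ∀ m < M, t (m + 1) - t m ≤ c) (j d : ℕ)
    (hjd : j + d ≤ M) : t (j + d) - t j ≤ d * c := by
  have := mul_le_mesh (fun m => -t m) M (-c) (fun m hm => by have := h m hm; linarith) j d hjd
  linarith

lemma abs_integral_le_of_mem_Icc (φ : ℝ → ℝ) (C l0 lend p q : ℝ) (hφ : ∀ u, |φ u| ≤ C)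
    (hp : p ∈ Icc l0 lend) (hq : q ∈ Icc l0 lend) :
    |∫ τ in p..q, φ τ| ≤ C * (lend - l0) := by
  have h1 := intervalIntegral.norm_integral_le_of_norm_le_const
    (a := p) (b := q) (f := φ) (C := C) (fun τ _ => hφ τ)
  have h2 : 0 ≤ C := (abs_nonneg _).trans (hφ 0)
  refine h1.trans (mul_le_mul_of_nonneg_left ?_ h2)
  rw [abs_le]
  constructor <;> linarith [hp.1, hp.2, hq.1, hq.2]

/-! ### The predictor as a perturbed variation-of-constants formula -/

/-- The polynomial `v ↦ g₀ + ∑ⱼ uⱼ (v - p)^(j+1)` formed from the derivative estimates of the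
predictor. The Vandermonde system says that it interpolates the computed values of the
parameterization. -/
noncomputable def predictorPoly (n : ℕ) (p g₀ : ℝ) (u : Fin n → ℝ) : Polynomial ℝ :=
  Polynomial.C g₀ + ∑ j : Fin n,
    Polynomial.C (u j) * (Polynomial.X - Polynomial.C p) ^ ((j : ℕ) + 1)

lemma eval_predictorPoly (n : ℕ) (p g₀ : ℝ) (u : Fin n → ℝ) (v : ℝ) :
    (predictorPoly n p g₀ u).eval v = g₀ + ∑ j : Fin n, u j * (v - p) ^ ((j : ℕ) + 1) := by
  simp [predictorPoly, Polynomial.eval_finsetSum]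

lemma natDegree_predictorPoly_le (n : ℕ) (p g₀ : ℝ) (u : Fin n → ℝ) :
    (predictorPoly n p g₀ u).natDegree ≤ n := by
  unfold predictorPoly
  rw [Polynomial.natDegree_C_add]
  refine Polynomial.natDegree_sum_le_of_forall_le _ _ fun j _ => ?_
  refine (Polynomial.natDegree_C_mul_le _ _).trans ?_
  rw [Polynomial.natDegree_pow, Polynomial.natDegree_X_sub_C]
  omega

/-- The predictor update is the variation-of-constants formula with the exact parameterization
replaced by the interpolating polynomial. -/
lemma numeric_step (n : ℕ) (l s b : ℝ → ℝ) (hl : Continuous l) (hs : Continuous s)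
    (hb : Continuous b) (p w αp αw y y₀ g₀ : ℝ) (hαw : αw ≠ 0) (u : Fin n → ℝ)
    (hy : y = αw * Real.exp (-(∫ τ in p..w, l τ)) *
      (y₀ / αp
        - (∫ v in p..w, Real.exp (∫ τ in p..v, l τ + s τ) *
            (∫ r in p..v, Real.exp (-(∫ τ in p..r, s τ)) * b r))
        - g₀ * (∫ v in p..w, Real.exp (∫ τ in p..v, l τ + s τ))
        - ∑ j : Fin n, (Nat.factorial ((j : ℕ) + 1) : ℝ) * u j *
            ∫ v in p..w, Real.exp (∫ τ in p..v, l τ + s τ) *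
              (v - p) ^ ((j : ℕ) + 1) / (Nat.factorial ((j : ℕ) + 1) : ℝ))) :
    y / αw * Real.exp (∫ τ in p..w, l τ) = y₀ / αp -
      ∫ v in p..w, Real.exp (∫ τ in p..v, l τ + s τ) *
        ((∫ r in p..v, Real.exp (-(∫ τ in p..r, s τ)) * b r)
          + (predictorPoly n p g₀ u).eval v) := by
  have hS : Continuous fun v => ∫ τ in p..v, s τ :=
    intervalIntegral.continuous_primitive (fun a c => hs.intervalIntegrable a c) p
  have hLS : Continuous fun v => ∫ τ in p..v, l τ + s τ :=
    intervalIntegral.continuous_primitive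
      (fun a c => (hl.add hs).intervalIntegrable a c) p
  have hBc : Continuous fun r => Real.exp (-(∫ τ in p..r, s τ)) * b r := by fun_prop
  have hB : Continuous fun v => ∫ r in p..v, Real.exp (-(∫ τ in p..r, s τ)) * b r :=
    intervalIntegral.continuous_primitive (fun a c => hBc.intervalIntegrable a c) p
  have hsplit : (∫ v in p..w, Real.exp (∫ τ in p..v, l τ + s τ) *
        ((∫ r in p..v, Real.exp (-(∫ τ in p..r, s τ)) * b r)
          + (predictorPoly n p g₀ u).eval v)) =
      (∫ v in p..w, Real.exp (∫ τ in p..v, l τ + s τ) *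
            (∫ r in p..v, Real.exp (-(∫ τ in p..r, s τ)) * b r))
        + g₀ * (∫ v in p..w, Real.exp (∫ τ in p..v, l τ + s τ))
        + ∑ j : Fin n, (Nat.factorial ((j : ℕ) + 1) : ℝ) * u j *
            ∫ v in p..w, Real.exp (∫ τ in p..v, l τ + s τ) *
              (v - p) ^ ((j : ℕ) + 1) / (Nat.factorial ((j : ℕ) + 1) : ℝ) := by
    simp_rw [← intervalIntegral.integral_const_mul]
    rw [← intervalIntegral.integral_finsetSum, ← intervalIntegral.integral_add,
      ← intervalIntegral.integral_add]
    · refine intervalIntegral.integral_congr fun v _ => ?_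
      simp only [eval_predictorPoly]
      rw [mul_add, mul_add, Finset.mul_sum, ← add_assoc]
      congr 1
      · rw [intervalIntegral.integral_const_mul]
        ring
      · refine Finset.sum_congr rfl fun j _ => ?_
        have : (Nat.factorial ((j : ℕ) + 1) : ℝ) ≠ 0 := by positivity
        field_simp
    all_goals first
      | (refine Continuous.intervalIntegrable ?_ _ _; fun_prop)
      | (intro j _; refine Continuous.intervalIntegrable ?_ _ _; fun_prop)
  rw [hsplit, hy, Real.exp_neg]
  have := (Real.exp_pos (∫ τ in p..w, l τ)).ne'
  field_simp
  ring

/-- One step of the error recursion in a single coordinate. The error is divided by `α` and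
multiplied by `exp (∫ l)`, which makes the homogeneous part of the recursion the identity; what
remains is the integrated difference between the predictor polynomial and the exact
parameterization. -/
lemma error_step (D n : ℕ) (α α' : ℝ → ℝ) (hαpos : ∀ u, 0 < α u)
    (hα : ∀ u, HasDerivAt α (α' u) u)
    (l s b : ℝ → Fin D → ℝ) (hl : Continuous l) (hs : Continuous s) (hb : Continuous b)
    (Cl Cs : ℝ) (hlB : ∀ u i, |l u i| ≤ Cl) (hsB : ∀ u i, |s u i| ≤ Cs)
    (f : (Fin D → ℝ) → ℝ → Fin D → ℝ) (l0 lend : ℝ) (x : ℝ → Fin D → ℝ) (i : Fin D)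
    (hx : ∀ u ∈ Set.Icc l0 lend,
      HasDerivWithinAt (fun v => x v i)
        ((α' u / α u - l u i) * x u i - α u * f (x u) u i) (Set.Icc l0 lend) u)
    (p w : ℝ) (hp : l0 ≤ p) (hpw : p ≤ w) (hw : w ≤ lend)
    (hG : ContinuousOn (fun u => gpar D s b f p (x u) u i) (Icc l0 lend))
    (y y₀ g₀ η : ℝ) (u : Fin n → ℝ)
    (hη : ∀ v ∈ Icc p w, |(predictorPoly n p g₀ u).eval v - gpar D s b f p (x v) v i| ≤ η)
    (hy : y = α w * Real.exp (-(∫ τ in p..w, l τ i)) *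
      (y₀ / α p
        - (∫ v in p..w, Real.exp (∫ τ in p..v, l τ i + s τ i) *
            (∫ r in p..v, Real.exp (-(∫ τ in p..r, s τ i)) * b r i))
        - g₀ * (∫ v in p..w, Real.exp (∫ τ in p..v, l τ i + s τ i))
        - ∑ j : Fin n, (Nat.factorial ((j : ℕ) + 1) : ℝ) * u j *
            ∫ v in p..w, Real.exp (∫ τ in p..v, l τ i + s τ i) *
              (v - p) ^ ((j : ℕ) + 1) / (Nat.factorial ((j : ℕ) + 1) : ℝ))) :
    |(y - x w i) / α w * Real.exp (∫ τ in l0..w, l τ i)| ≤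
      |(y₀ - x p i) / α p * Real.exp (∫ τ in l0..p, l τ i)| +
        Real.exp (Cl * (lend - l0)) *
          (Real.exp ((Cl + Cs) * (lend - l0)) * η * (w - p)) := by
  have hli : Continuous fun τ => l τ i := (continuous_apply i).comp hl
  have hsi : Continuous fun τ => s τ i := (continuous_apply i).comp hs
  have hbi : Continuous fun τ => b τ i := (continuous_apply i).comp hb
  have hpm : p ∈ Icc l0 lend := ⟨hp, hpw.trans hw⟩
  have hη0 : 0 ≤ η := (abs_nonneg _).trans (hη p (left_mem_Icc.2 hpw))
  have hsub : Icc p w ⊆ Icc l0 lend := Icc_subset_Icc hp hw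
  have hex := exact_step D α α' hαpos hα l s b hl hs hb f l0 lend x i hx p w hp hpw hw hG
  have hnum := numeric_step n (fun τ => l τ i) (fun τ => s τ i) (fun τ => b τ i) hli hsi hbi
    p w (α p) (α w) y y₀ g₀ (hαpos w).ne' u hy
  have hS : Continuous fun v => ∫ τ in p..v, s τ i :=
    intervalIntegral.continuous_primitive (fun a c => hsi.intervalIntegrable a c) p
  have hLS : Continuous fun v => ∫ τ in p..v, l τ i + s τ i :=
    intervalIntegral.continuous_primitive
      (fun a c => (hli.add hsi).intervalIntegrable a c) p
  have hBc : Continuous fun r => Real.exp (-(∫ τ in p..r, s τ i)) * b r i := by fun_prop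
  have hB : Continuous fun v => ∫ r in p..v, Real.exp (-(∫ τ in p..r, s τ i)) * b r i :=
    intervalIntegral.continuous_primitive (fun a c => hBc.intervalIntegrable a c) p
  have hdiff : (∫ v in p..w, Real.exp (∫ τ in p..v, l τ i + s τ i) *
        ((predictorPoly n p g₀ u).eval v - gpar D s b f p (x v) v i)) =
      (∫ v in p..w, Real.exp (∫ τ in p..v, l τ i + s τ i) *
        ((∫ r in p..v, Real.exp (-(∫ τ in p..r, s τ i)) * b r i)
          + (predictorPoly n p g₀ u).eval v)) -
      ∫ v in p..w, Real.exp (∫ τ in p..v, l τ i + s τ i) *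
        ((∫ r in p..v, Real.exp (-(∫ τ in p..r, s τ i)) * b r i)
          + gpar D s b f p (x v) v i) := by
    rw [← intervalIntegral.integral_sub]
    · refine intervalIntegral.integral_congr fun v _ => ?_
      ring
    · refine Continuous.intervalIntegrable ?_ _ _
      fun_prop
    · refine ContinuousOn.intervalIntegrable ?_
      rw [uIcc_of_le hpw]
      exact ContinuousOn.mul (Real.continuous_exp.comp hLS).continuousOn
        (hB.continuousOn.add (hG.mono hsub))
  have hbound : |∫ v in p..w, Real.exp (∫ τ in p..v, l τ i + s τ i) *
        ((predictorPoly n p g₀ u).eval v - gpar D s b f p (x v) v i)| ≤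
      Real.exp ((Cl + Cs) * (lend - l0)) * η * (w - p) := by
    have h1 := intervalIntegral.norm_integral_le_of_norm_le_const (a := p) (b := w)
      (f := fun v => Real.exp (∫ τ in p..v, l τ i + s τ i) *
        ((predictorPoly n p g₀ u).eval v - gpar D s b f p (x v) v i))
      (C := Real.exp ((Cl + Cs) * (lend - l0)) * η) (fun v hv => by
        rw [uIoc_of_le hpw] at hv
        have hv' : v ∈ Icc p w := Ioc_subset_Icc_self hv
        rw [norm_mul, Real.norm_eq_abs, Real.norm_eq_abs, Real.abs_exp]
        refine mul_le_mul (Real.exp_le_exp.2 ?_) (hη v hv') (abs_nonneg _) (Real.exp_pos _).le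
        exact (le_abs_self _).trans (abs_integral_le_of_mem_Icc _ (Cl + Cs) l0 lend p v
          (fun τ => (abs_add_le _ _).trans (add_le_add (hlB τ i) (hsB τ i))) hpm (hsub hv')))
    rwa [Real.norm_eq_abs, abs_of_nonneg (sub_nonneg.2 hpw)] at h1
  have hlin : (y - x w i) / α w * Real.exp (∫ τ in l0..w, l τ i) =
      (y₀ - x p i) / α p * Real.exp (∫ τ in l0..p, l τ i) -
        Real.exp (∫ τ in l0..p, l τ i) *
          ∫ v in p..w, Real.exp (∫ τ in p..v, l τ i + s τ i) *
            ((predictorPoly n p g₀ u).eval v - gpar D s b f p (x v) v i) := by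
    rw [hdiff, ← intervalIntegral.integral_add_adjacent_intervals
      (hli.intervalIntegrable l0 p) (hli.intervalIntegrable p w), Real.exp_add, sub_div, sub_div]
    linear_combination Real.exp (∫ τ in l0..p, l τ i) * hnum -
      Real.exp (∫ τ in l0..p, l τ i) * hex
  rw [hlin]
  refine (abs_sub _ _).trans (add_le_add le_rfl ?_)
  rw [abs_mul, Real.abs_exp]
  refine mul_le_mul (Real.exp_le_exp.2 ?_) hbound (abs_nonneg _) (Real.exp_pos _).le
  exact (le_abs_self _).trans (abs_integral_le_of_mem_Icc _ Cl l0 lend l0 p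
    (fun τ => hlB τ i) ⟨le_rfl, hp.trans (hpw.trans hw)⟩ hpm)

/-! ### Local error and global convergence -/

/-- Local consistency and stability: the predictor polynomial differs from the exact
parameterization on the next step by the earlier errors plus the interpolation error. -/
lemma abs_predictorPoly_sub_gpar_le (D n : ℕ) (s b : ℝ → Fin D → ℝ) (Cs : ℝ)
    (hsB : ∀ u i, |s u i| ≤ Cs) (f : (Fin D → ℝ) → ℝ → Fin D → ℝ) (L : ℝ)
    (hLip : ∀ (u : ℝ) (xv yv : Fin D → ℝ), ‖f xv u - f yv u‖ ≤ L * ‖xv - yv‖)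
    (l0 lend : ℝ) (x : ℝ → Fin D → ℝ) (ρ h K ε : ℝ) (hρ : 0 < ρ) (hh : 0 < h) (hK : 0 ≤ K)
    (M r : ℕ) (hr : r + n + 1 ≤ M) (t : ℕ → ℝ) (xh : ℕ → Fin D → ℝ) (u : Fin n → ℝ) (i : Fin D)
    (hmem : ∀ m ≤ M, t m ∈ Icc l0 lend)
    (hup : ∀ m < M, t (m + 1) - t m ≤ h) (hlow : ∀ m < M, ρ * h ≤ t (m + 1) - t m)
    (hT : ∃ P : Polynomial ℝ, P.natDegree ≤ n ∧ ∀ v ∈ Icc (t r) lend,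
      |gpar D s b f (t (r + n)) (x v) v i - P.eval v| ≤ K * (v - t r) ^ (n + 1))
    (hε : ∀ k ≤ n, ‖xh (r + k) - x (t (r + k))‖ ≤ ε)
    (hV : ∀ k : Fin n, (∑ j : Fin n, (t (r + k) - t (r + n)) ^ ((j : ℕ) + 1) * u j) =
      gpar D s b f (t (r + n)) (xh (r + k)) (t (r + k)) i
        - gpar D s b f (t (r + n)) (xh (r + n)) (t (r + n)) i)
    (v : ℝ) (hv : v ∈ Icc (t (r + n)) (t (r + n + 1))) :
    |(predictorPoly n (t (r + n))
        (gpar D s b f (t (r + n)) (xh (r + n)) (t (r + n)) i) u).eval v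
      - gpar D s b f (t (r + n)) (x v) v i| ≤
      (n + 1) * ((n + 1) / ρ) ^ n *
          (Real.exp (Cs * (lend - l0)) * (|L| * ε) + K * (n + 1) ^ (n + 1) * h ^ (n + 1))
        + K * (n + 1) ^ (n + 1) * h ^ (n + 1) := by
  obtain ⟨P, hP, hPb⟩ := hT
  set p := t (r + n) with hpdef
  set q := predictorPoly n p (gpar D s b f p (xh (r + n)) p i) u with hqdef
  have hρh : 0 < ρ * h := mul_pos hρ hh
  have hge : ∀ j d, j + d ≤ M → t j ≤ t (j + d) := fun j d hjd => by
    have := mul_le_mesh t M (ρ * h) hlow j d hjd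
    have h2 : 0 ≤ (d : ℝ) * (ρ * h) := by positivity
    linarith
  have hgap : t (r + n + 1) - t r ≤ (n + 1) * h := by
    have := mesh_le_mul t M h hup r (n + 1) hr
    push_cast at this
    exact this
  have hvr : t r ≤ v := (hge r n (by omega)).trans hv.1
  have hvend : v ≤ lend := hv.2.trans (hmem _ hr).2
  -- the Taylor remainder anywhere in the stencil
  have hrem : ∀ z, t r ≤ z → z ≤ t (r + n + 1) →
      |gpar D s b f p (x z) z i - P.eval z| ≤ K * (n + 1) ^ (n + 1) * h ^ (n + 1) := by
    intro z hz1 hz2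
    refine (hPb z ⟨hz1, hz2.trans (hmem _ hr).2⟩).trans ?_
    rw [mul_assoc, ← mul_pow]
    have h1 : 0 ≤ z - t r := sub_nonneg.2 hz1
    have h2 : z - t r ≤ (n + 1) * h := by linarith
    gcongr
  have hinterp : ∀ k ≤ n, q.eval (t (r + k)) = gpar D s b f p (xh (r + k)) (t (r + k)) i := by
    intro k hk
    rw [hqdef, eval_predictorPoly]
    rcases hk.eq_or_lt with rfl | hk
    · rw [← hpdef]
      simp
    · have := hV ⟨k, hk⟩
      simp_rw [mul_comm (u _)]
      rw [this]
      ring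
  have hval : ∀ k ≤ n, |gpar D s b f p (xh (r + k)) (t (r + k)) i -
      gpar D s b f p (x (t (r + k))) (t (r + k)) i| ≤
        Real.exp (Cs * (lend - l0)) * (|L| * ε) := by
    intro k hk
    simp only [gpar]
    rw [sub_sub_sub_cancel_right, ← mul_sub, abs_mul, Real.abs_exp]
    refine mul_le_mul (Real.exp_le_exp.2 ?_) ?_ (abs_nonneg _) (Real.exp_pos _).le
    · exact (neg_le_abs _).trans (abs_integral_le_of_mem_Icc _ Cs l0 lend _ _
        (fun τ => hsB τ i) (hmem _ (by omega)) (hmem _ (by omega)))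
    · have h1 := norm_le_pi_norm (f (xh (r + k)) (t (r + k)) - f (x (t (r + k))) (t (r + k))) i
      rw [Pi.sub_apply, Real.norm_eq_abs] at h1
      refine h1.trans ((hLip _ _ _).trans ?_)
      exact mul_le_mul (le_abs_self L) (hε k hk) (norm_nonneg _) (abs_nonneg _)
  have hstab := abs_eval_le_of_nodes n (fun k => t (r + k)) v ρ h
    (Real.exp (Cs * (lend - l0)) * (|L| * ε) + K * (n + 1) ^ (n + 1) * h ^ (n + 1)) hρ hh ?_ ?_
    (q - P) ?_ ?_
  · rw [Polynomial.eval_sub] at hstab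
    have h1 := hrem v hvr hv.2
    have h2 := abs_sub_le (q.eval v) (P.eval v) (gpar D s b f p (x v) v i)
    rw [abs_sub_comm (P.eval v)] at h2
    linarith
  · have hlt : ∀ j k, j < k → k ≤ n → ρ * h ≤ t (r + k) - t (r + j) := by
      intro j k hjk hk
      have h1 := mul_le_mesh t M (ρ * h) hlow (r + j) (k - j) (by omega)
      rw [show r + j + (k - j) = r + k by omega] at h1
      have h2 : (1 : ℝ) ≤ ((k - j : ℕ) : ℝ) := by
        exact_mod_cast Nat.sub_pos_of_lt hjk
      nlinarith
    intro j hj k hk hjk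
    rcases lt_or_gt_of_ne hjk with hlt' | hlt'
    · rw [abs_sub_comm]
      exact (hlt j k hlt' hk).trans (le_abs_self _)
    · exact (hlt k j hlt' hj).trans (le_abs_self _)
  · intro k hk
    have h1 := hge r k (by omega)
    have h2 := hge (r + k) (n - k) (by omega)
    rw [show r + k + (n - k) = r + n by omega] at h2
    have h3 := hv.1
    have h4 := hv.2
    rw [abs_of_nonneg (by linarith)]
    linarith
  · exact (Polynomial.natDegree_sub_le _ _).trans
      (max_le (natDegree_predictorPoly_le _ _ _ _) hP)
  · intro k hk
    have h1 := hge r k (by omega)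
    have h2 := hge (r + k) (n + 1 - k) (by omega)
    rw [show r + k + (n + 1 - k) = r + n + 1 by omega] at h2
    have h3 := hrem _ h1 h2
    have h4 := hval k hk
    rw [Polynomial.eval_sub, hinterp k hk]
    exact (abs_sub_le _ _ _).trans (add_le_add h4 h3)

/-- **Global order of convergence of the `(n+1)`-th order multistep predictor (Theorem 3.3).**
Under regularity, boundedness, Lipschitz, stepsize and starting-value assumptions, the final
error of the `(n+1)`-th order multistep predictor satisfies `‖x̂_M − x(λ_M)‖ = O(h^{n+1})`. -/
theorem dpm_solver_v3_global_convergence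
    (D n : ℕ) (hD : 1 ≤ D)
    (α α' : ℝ → ℝ) (hαpos : ∀ u, 0 < α u)
    (hα : ∀ u, HasDerivAt α (α' u) u) (hα' : Continuous α')
    (l s b : ℝ → Fin D → ℝ)
    (hl : ContDiff ℝ n l) (hs : ContDiff ℝ n s) (hb : ContDiff ℝ n b)
    (Cl Cs Cb : ℝ)
    (hlB : ∀ u i, |l u i| ≤ Cl) (hsB : ∀ u i, |s u i| ≤ Cs) (hbB : ∀ u i, |b u i| ≤ Cb)
    -- `f(·, λ)` is Lipschitz in its first argument uniformly in `λ`
    (f : (Fin D → ℝ) → ℝ → Fin D → ℝ) (L : ℝ)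
    (hLip : ∀ (u : ℝ) (xv yv : Fin D → ℝ), ‖f xv u - f yv u‖ ≤ L * ‖xv - yv‖)
    -- the exact solution `x` of `x′ = (α̇/α − l)·x − α·f(x, λ)` on `[λ₀, λ_end]`
    (l0 lend : ℝ) (hl0 : l0 < lend)
    (x : ℝ → Fin D → ℝ)
    (hx : ∀ u ∈ Set.Icc l0 lend, ∀ i : Fin D,
      HasDerivWithinAt (fun v => x v i)
        ((α' u / α u - l u i) * x u i - α u * f (x u) u i) (Set.Icc l0 lend) u)
    -- the generalized parameterization along the exact trajectory is `(n+1)`-times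
    -- continuously differentiable (for every base point)
    (hgsmooth : ∀ p ∈ Set.Icc l0 lend,
      ContDiffOn ℝ (n + 1 : ℕ∞) (fun u => gpar D s b f p (x u) u) (Set.Icc l0 lend))
    -- fixed constants: `h ≤ c/M`, lower stepsize-ratio bound `ρ`, starting-value constant `C₀`
    (c ρ C₀ : ℝ) (hc : 0 < c) (hρ : 0 < ρ) (hρ1 : ρ ≤ 1) (hC₀ : 0 ≤ C₀) :
    ∃ C : ℝ, ∃ M₀ : ℕ, ∀ M : ℕ, M₀ ≤ M → n < M →
      ∀ (t : ℕ → ℝ) (xh : ℕ → Fin D → ℝ) (u : ℕ → Fin n → Fin D → ℝ) (h : ℝ),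
        0 < h →
        t 0 = l0 → t M = lend →
        (∀ m < M, t m < t (m + 1)) →
        -- maximal stepsize `h` with `h ≤ c/M` and bounded stepsize ratios
        (∀ m < M, t (m + 1) - t m ≤ h) →
        (∀ m < M, ρ * h ≤ t (m + 1) - t m) →
        h ≤ c / M →
        -- starting values
        (∀ m ≤ n, ‖xh m - x (t m)‖ ≤ C₀ * h ^ (n + 1)) →
        -- derivative estimates: Vandermonde-type system at base point `t (m−1)` using the
        -- previously computed values at the `n` preceding timesteps
        (∀ m, n < m → m ≤ M → ∀ k : Fin n, ∀ i : Fin D,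
          (∑ j : Fin n, (t (m - 1 - n + (k : ℕ)) - t (m - 1)) ^ ((j : ℕ) + 1) * u m j i)
            = gpar D s b f (t (m - 1)) (xh (m - 1 - n + (k : ℕ))) (t (m - 1 - n + (k : ℕ))) i
              - gpar D s b f (t (m - 1)) (xh (m - 1)) (t (m - 1)) i) →
        -- the `(n+1)`-th order multistep predictor update
        (∀ m, n < m → m ≤ M → ∀ i : Fin D,
          xh m i = α (t m) * Real.exp (-(∫ τ in t (m - 1)..t m, l τ i)) *
            (xh (m - 1) i / α (t (m - 1))
              - (∫ v in t (m - 1)..t m, Real.exp (∫ τ in t (m - 1)..v, l τ i + s τ i) *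
                  (∫ r in t (m - 1)..v, Real.exp (-(∫ τ in t (m - 1)..r, s τ i)) * b r i))
              - gpar D s b f (t (m - 1)) (xh (m - 1)) (t (m - 1)) i *
                  (∫ v in t (m - 1)..t m, Real.exp (∫ τ in t (m - 1)..v, l τ i + s τ i))
              - ∑ j : Fin n, (Nat.factorial ((j : ℕ) + 1) : ℝ) * u m j i *
                  ∫ v in t (m - 1)..t m, Real.exp (∫ τ in t (m - 1)..v, l τ i + s τ i) *
                    (v - t (m - 1)) ^ ((j : ℕ) + 1) / (Nat.factorial ((j : ℕ) + 1) : ℝ))) →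
        ‖xh M - x (t M)‖ ≤ C * h ^ (n + 1) := by
  have hlc := hl.continuous
  have hsc := hs.continuous
  have hbc := hb.continuous
  have hαc : Continuous α := continuous_iff_continuousAt.2 fun u => (hα u).continuousAt
  have hl0m : l0 ∈ Icc l0 lend := left_mem_Icc.2 hl0.le
  obtain ⟨A, hA⟩ := isCompact_Icc.exists_bound_of_continuousOn (hαc.continuousOn (s := Icc l0 lend))
  obtain ⟨A', hA'⟩ := isCompact_Icc.exists_bound_of_continuousOn
    ((hαc.inv₀ fun u => (hαpos u).ne').continuousOn (s := Icc l0 lend))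
  have hA0 : 0 ≤ A := (norm_nonneg _).trans (hA l0 hl0m)
  have hA'0 : 0 ≤ A' := (norm_nonneg _).trans (hA' l0 hl0m)
  obtain ⟨K, hK0, hK⟩ := exists_uniform_taylor_gpar D n s b f hsc hbc Cs hsB l0 lend hl0 x
    (hgsmooth l0 hl0m)
  set EL := Real.exp (Cl * (lend - l0)) with hEL
  set ES := Real.exp (Cs * (lend - l0)) with hES
  set EE := Real.exp ((Cl + Cs) * (lend - l0)) with hEE
  have hEL0 : 0 < EL := Real.exp_pos _
  have hES0 : 0 < ES := Real.exp_pos _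
  have hEE0 : 0 < EE := Real.exp_pos _
  set Λ : ℝ := (n + 1) * ((n + 1) / ρ) ^ n with hΛ
  have hΛ0 : 0 ≤ Λ := by positivity
  set K1 : ℝ := ES * (|L| * (A * EL)) with hK1
  set K2 : ℝ := K * (n + 1) ^ (n + 1) with hK2
  have hK10 : 0 ≤ K1 := by positivity
  have hK20 : 0 ≤ K2 := by positivity
  set K3 : ℝ := Λ * K1 + (Λ + 1) * K2 with hK3
  have hK30 : 0 ≤ K3 := by positivity
  set Kt : ℝ := EL * (EE * K3) with hKt
  have hKt0 : 0 ≤ Kt := by positivity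
  refine ⟨A * EL * (Real.exp (Kt * c) * (A' * EL * C₀ + 1)), 0, ?_⟩
  intro M _ hnM t xh u h hh ht0 htM hmono hup hlow hhM hstart hV hupd
  have hδ0 : 0 ≤ h ^ (n + 1) := by positivity
  have hge : ∀ j d, j + d ≤ M → t j ≤ t (j + d) := fun j d hjd => by
    have := mul_le_mesh t M 0 (fun m hm => (sub_pos.2 (hmono m hm)).le) j d hjd
    simpa using this
  have hmem : ∀ m ≤ M, t m ∈ Icc l0 lend := fun m hm => by
    have h1 := hge 0 m (by omega)
    have h2 := hge m (M - m) (by omega)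
    rw [zero_add, ht0] at h1
    rw [show m + (M - m) = M by omega, htM] at h2
    exact ⟨h1, h2⟩
  -- the error in the coordinates in which the homogeneous recursion is trivial
  set w : ℕ → ℝ := fun m => ‖fun i : Fin D =>
    (xh m i - x (t m) i) / α (t m) * Real.exp (∫ τ in l0..t m, l τ i)‖ with hw
  have hw0 : ∀ m, 0 ≤ w m := fun m => norm_nonneg _
  have hlint : ∀ m ≤ M, ∀ i, |∫ τ in l0..t m, l τ i| ≤ Cl * (lend - l0) := fun m hm i =>
    abs_integral_le_of_mem_Icc _ Cl l0 lend _ _ (fun τ => hlB τ i) hl0m (hmem m hm)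
  have hw_le : ∀ m ≤ M, w m ≤ A' * EL * ‖xh m - x (t m)‖ := by
    intro m hm
    refine (pi_norm_le_iff_of_nonneg (by positivity)).2 fun i => ?_
    have h1 := norm_le_pi_norm (xh m - x (t m)) i
    have h2 : ‖(α (t m))⁻¹‖ ≤ A' := hA' _ (hmem m hm)
    have h3 : Real.exp (∫ τ in l0..t m, l τ i) ≤ EL :=
      Real.exp_le_exp.2 ((le_abs_self _).trans (hlint m hm i))
    rw [Pi.sub_apply] at h1
    rw [norm_mul, div_eq_mul_inv, norm_mul, Real.norm_eq_abs (Real.exp _), Real.abs_exp]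
    calc _ ≤ ‖xh m - x (t m)‖ * A' * EL := by gcongr
      _ = _ := by ring
  have hle_w : ∀ m ≤ M, ‖xh m - x (t m)‖ ≤ A * EL * w m := by
    intro m hm
    refine (pi_norm_le_iff_of_nonneg (mul_nonneg (by positivity) (hw0 m))).2 fun i => ?_
    have h1 : |(xh m i - x (t m) i) / α (t m) * Real.exp (∫ τ in l0..t m, l τ i)| ≤ w m :=
      norm_le_pi_norm (fun i : Fin D =>
        (xh m i - x (t m) i) / α (t m) * Real.exp (∫ τ in l0..t m, l τ i)) i
    have h2 := hA _ (hmem m hm)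
    have h3 : Real.exp (-∫ τ in l0..t m, l τ i) ≤ EL :=
      Real.exp_le_exp.2 ((neg_le_abs _).trans (hlint m hm i))
    have h4 : (xh m - x (t m)) i = α (t m) * Real.exp (-∫ τ in l0..t m, l τ i) *
        ((xh m i - x (t m) i) / α (t m) * Real.exp (∫ τ in l0..t m, l τ i)) := by
      rw [Real.exp_neg, Pi.sub_apply]
      have := (hαpos (t m)).ne'
      field_simp
    rw [h4, norm_mul, norm_mul, Real.norm_eq_abs (Real.exp _), Real.abs_exp]
    exact mul_le_mul (mul_le_mul h2 h3 (Real.exp_pos _).le hA0) h1 (abs_nonneg _) (by positivity)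
  have hgron := multistep_gronwall w n M Kt h (h ^ (n + 1)) (A' * EL * C₀) hKt0 hh.le hδ0
    (by positivity) ?_ ?_ M le_rfl
  · have hMpos : (0 : ℝ) < M := by exact_mod_cast (Nat.zero_le n).trans_lt hnM
    have hpow : (1 + Kt * h) ^ M ≤ Real.exp (Kt * c) := by
      have h1 : 1 + Kt * h ≤ Real.exp (Kt * h) := by
        have := Real.add_one_le_exp (Kt * h)
        linarith
      calc (1 + Kt * h) ^ M ≤ Real.exp (Kt * h) ^ M := by gcongr
        _ = Real.exp (Kt * (h * M)) := by
            rw [← Real.exp_nat_mul]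
            congr 1
            ring
        _ ≤ Real.exp (Kt * c) := by
            have := (le_div_iff₀ hMpos).1 hhM
            gcongr
    have hw1 : w M ≤ Real.exp (Kt * c) * ((A' * EL * C₀ + 1) * h ^ (n + 1)) := by
      refine (hgron.trans (sub_le_self _ hδ0)).trans ?_
      gcongr
    calc ‖xh M - x (t M)‖ ≤ A * EL * w M := hle_w M le_rfl
      _ ≤ A * EL * (Real.exp (Kt * c) * ((A' * EL * C₀ + 1) * h ^ (n + 1))) := by gcongr
      _ = _ := by ring
  · intro m hm
    refine (hw_le m (by omega)).trans ?_
    have := hstart m hm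
    calc _ ≤ A' * EL * (C₀ * h ^ (n + 1)) := by gcongr
      _ = _ := by ring
  · intro r hr W hW
    have hW0 : 0 ≤ W := (hw0 0).trans (hW 0 (by omega))
    refine (pi_norm_le_iff_of_nonneg (by positivity)).2 fun i => ?_
    have hp := hmem (r + n) (by omega)
    have hq := hmem (r + n + 1) hr
    have hη : ∀ v ∈ Icc (t (r + n)) (t (r + n + 1)),
        |(predictorPoly n (t (r + n))
          (gpar D s b f (t (r + n)) (xh (r + n)) (t (r + n)) i)
            (fun j => u (r + n + 1) j i)).eval v
          - gpar D s b f (t (r + n)) (x v) v i| ≤ K3 * (W + h ^ (n + 1)) := by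
      intro v hv
      refine (abs_predictorPoly_sub_gpar_le D n s b Cs hsB f L hLip l0 lend x ρ h K (A * EL * W)
        hρ hh hK0 M r hr t xh (fun j => u (r + n + 1) j i) i hmem hup hlow
        (hK _ hp _ (hmem r (by omega)) i) ?_ ?_ v hv).trans ?_
      · intro k hk
        refine (hle_w _ (by omega)).trans ?_
        have := hW (r + k) (by omega)
        gcongr
      · intro k
        have := hV (r + n + 1) (by omega) hr k i
        simpa only [Nat.add_sub_cancel] using this
      · have e : Λ * (ES * (|L| * (A * EL * W)) + K2 * h ^ (n + 1)) + K2 * h ^ (n + 1) =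
            Λ * K1 * W + (Λ + 1) * K2 * h ^ (n + 1) := by
          rw [hK1]
          ring
        refine e.le.trans ?_
        have h1 : 0 ≤ Λ * K1 * h ^ (n + 1) := by positivity
        have h2 : 0 ≤ (Λ + 1) * K2 * W := by positivity
        rw [hK3]
        linarith
    have hupd' := hupd (r + n + 1) (by omega) hr i
    simp only [Nat.add_sub_cancel] at hupd'
    have hstep := error_step D n α α' hαpos hα l s b hlc hsc hbc Cl Cs hlB hsB f l0 lend x i
      (fun u hu => hx u hu i) (t (r + n)) (t (r + n + 1)) hp.1 (hge _ 1 hr) hq.2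
      ((contDiffOn_pi.1 (hgsmooth _ hp) i).continuousOn) (xh (r + n + 1) i) (xh (r + n) i) _
      (K3 * (W + h ^ (n + 1))) (fun j => u (r + n + 1) j i) hη hupd'
    have hprev : |(xh (r + n) i - x (t (r + n)) i) / α (t (r + n)) *
        Real.exp (∫ τ in l0..t (r + n), l τ i)| ≤ W :=
      (norm_le_pi_norm (fun i : Fin D => (xh (r + n) i - x (t (r + n)) i) / α (t (r + n)) *
        Real.exp (∫ τ in l0..t (r + n), l τ i)) i).trans (hW (r + n) (by omega))
    have hlen := hup (r + n) (by omega)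
    refine hstep.trans (add_le_add hprev ?_)
    calc _ ≤ EL * (EE * (K3 * (W + h ^ (n + 1))) * h) := by gcongr
      _ = _ := by
          rw [hKt]
          ring
end

section
/- Let V be a real vector space, δ_0 := 0, and let δ_1, …, δ_k be nonzero pairwise distinct reals, and y_0, y_1, …, y_k ∈ V. Then the k×k linear system in unknowns (u_1, …, u_k) ∈ V^k given by Σ_{q=1}^{k} δ_p^q · u_q = y_p − y_0 (p = 1, …, k) has a unique solution, and its last component is u_k = Σ_{p=1}^{k} (y_p − y_0) / ∏_{q=0, q≠p}^{k} (δ_p − δ_q). -/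
/-!
The coefficient matrix `M p q = δ_{p+1} ^ (q+1)` is a Vandermonde matrix with its `p`-th row scaled
by `δ_{p+1} ≠ 0`, hence invertible, and an invertible real matrix acts bijectively on `V^k`. For the
last component, Lagrange interpolation of `X ^ (q+1)` at the nodes `δ_0, …, δ_k` expresses its
coefficient of degree `k` as `∑ p, δ_p ^ (q+1) / ∏_{j ≠ p} (δ_p - δ_j)`; the node `δ_0 = 0` contributes
nothing, so the weights `1 / ∏_{j ≠ p} (δ_p - δ_j)` form the last row of `M⁻¹`.
-/

/-- If the row vector `w` satisfies `w * M = e_r`, then `u r` is the `w`-combination of the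
right-hand sides of the system `M u = b` with vector-valued unknowns. -/
lemma component_eq_of_left_inverse_row {V : Type*} [AddCommGroup V] [Module ℝ V] {k : ℕ}
    (M : Matrix (Fin k) (Fin k) ℝ) (w : Fin k → ℝ) (r : Fin k)
    (hw : ∀ q, ∑ p, w p * M p q = if q = r then 1 else 0) (u b : Fin k → V)
    (hu : ∀ p, ∑ q, M p q • u q = b p) : u r = ∑ p, w p • b p := by
  simp_rw [← hu, Finset.smul_sum, smul_smul]
  rw [Finset.sum_comm]
  simp_rw [← Finset.sum_smul, hw]
  simp

lemma existsUnique_of_det_ne_zero {V : Type*} [AddCommGroup V] [Module ℝ V] {k : ℕ}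
    (M : Matrix (Fin k) (Fin k) ℝ) (hM : M.det ≠ 0) (b : Fin k → V) :
    ∃! u : Fin k → V, ∀ p, ∑ q, M p q • u q = b p := by
  have hunit : IsUnit M.det := isUnit_iff_ne_zero.mpr hM
  refine ⟨fun q => ∑ p, M⁻¹ q p • b p, fun p => ?_, fun u hu => ?_⟩
  · refine (component_eq_of_left_inverse_row M⁻¹ (M p) p (fun q => ?_) b _ fun _ => rfl).symm
    rw [← Matrix.mul_apply, Matrix.mul_nonsing_inv M hunit, Matrix.one_apply]
    simp only [eq_comm]
  · funext r
    refine component_eq_of_left_inverse_row M (M⁻¹ r) r (fun q => ?_) u b hu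
    rw [← Matrix.mul_apply, Matrix.nonsing_inv_mul M hunit, Matrix.one_apply]
    simp only [eq_comm]

/-- The weights in the formula for the last component pair to `1` with the last column of the
coefficient matrix and to `0` with the others: this is the top-degree coefficient in the Lagrange interpolation of
`X ^ (q + 1)`. -/
lemma sum_weight_mul_pow (k : ℕ) (δ : ℕ → ℝ) (hδ0 : δ 0 = 0)
    (hinj : Set.InjOn δ (Finset.range (k + 1))) (q : Fin k) :
    ∑ p : Fin k, (∏ j ∈ (Finset.range (k + 1)).erase ((p : ℕ) + 1), (δ ((p : ℕ) + 1) - δ j))⁻¹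
      * δ ((p : ℕ) + 1) ^ ((q : ℕ) + 1) = if (q : ℕ) + 1 = k then 1 else 0 := by
  have h := Lagrange.coeff_eq_sum (P := (Polynomial.X : Polynomial ℝ) ^ ((q : ℕ) + 1)) hinj
    (by
      rw [Polynomial.degree_X_pow, Finset.card_range]
      exact_mod_cast Nat.succ_lt_succ q.isLt)
  rw [Finset.card_range, Nat.add_sub_cancel, Polynomial.coeff_X_pow, Finset.sum_range_succ'] at h
  simp only [Polynomial.eval_pow, Polynomial.eval_X, hδ0, ne_eq, Nat.succ_ne_zero,
    not_false_eq_true, zero_pow, zero_div, add_zero] at h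
  rw [Finset.sum_range] at h
  simp only [eq_comm (a := k)] at h
  rw [h]
  exact Finset.sum_congr rfl fun p _ => by rw [div_eq_inv_mul]


/-- **Explicit solution of the Vandermonde-type finite-difference system (Lemma B.2).**
With `δ_0 = 0` and `δ_1, …, δ_k` nonzero pairwise distinct, the `k×k` system
`Σ_{q=1}^{k} δ_p^q • u_q = y_p − y_0` (`p = 1,…,k`) has a unique solution, and its last
component is `u_k = Σ_{p=1}^{k} (y_p − y_0) / ∏_{q=0, q≠p}^{k} (δ_p − δ_q)`. -/
theorem dpm_solver_v3_vandermonde_last_component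
    {V : Type*} [AddCommGroup V] [Module ℝ V]
    (k : ℕ) (hk : 1 ≤ k) (δ : ℕ → ℝ) (y : ℕ → V)
    (hδ0 : δ 0 = 0)
    (hne : ∀ p, 1 ≤ p → p ≤ k → δ p ≠ 0)
    (hdist : ∀ p q, p ≤ k → q ≤ k → p ≠ q → δ p ≠ δ q) :
    (∃! u : Fin k → V,
      ∀ p : Fin k, (∑ q : Fin k, (δ ((p : ℕ) + 1) ^ ((q : ℕ) + 1)) • u q)
        = y ((p : ℕ) + 1) - y 0) ∧
    ∀ u : Fin k → V,
      (∀ p : Fin k, (∑ q : Fin k, (δ ((p : ℕ) + 1) ^ ((q : ℕ) + 1)) • u q)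
        = y ((p : ℕ) + 1) - y 0) →
      u ⟨k - 1, by omega⟩
        = ∑ p : Fin k,
            (∏ q ∈ (Finset.range (k + 1)).erase ((p : ℕ) + 1),
              (δ ((p : ℕ) + 1) - δ q))⁻¹ • (y ((p : ℕ) + 1) - y 0) := by
  have hinj : Set.InjOn δ (Finset.range (k + 1)) := by
    intro a ha b hb hab
    simp only [Finset.coe_range, Set.mem_Iio] at ha hb
    by_contra hne'
    exact hdist a b (by omega) (by omega) hne' hab
  set M : Matrix (Fin k) (Fin k) ℝ :=
    Matrix.of fun p q => δ ((p : ℕ) + 1) * Matrix.vandermonde (fun i : Fin k => δ ((i : ℕ) + 1)) p q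
    with hMdef
  have hM : ∀ p q : Fin k, δ ((p : ℕ) + 1) ^ ((q : ℕ) + 1) = M p q := fun p q => by
    simp [hMdef, pow_succ']
  have hdet : M.det ≠ 0 := by
    rw [hMdef, Matrix.det_mul_column]
    refine mul_ne_zero (Finset.prod_ne_zero_iff.mpr fun p _ => hne _ (by omega) (by omega)) ?_
    rw [Matrix.det_vandermonde_ne_zero_iff]
    intro a b hab
    by_contra hne'
    exact hdist (a + 1) (b + 1) (by omega) (by omega) (by omega) hab
  constructor
  · simp only [hM]
    exact existsUnique_of_det_ne_zero M hdet _
  · intro u hu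
    simp only [hM] at hu
    refine component_eq_of_left_inverse_row M _ _ (fun q => ?_) u _ hu
    simp only [← hM]
    rw [sum_weight_mul_pow k δ hδ0 hinj q]
    congr 1
    rw [Fin.ext_iff, eq_iff_iff]
    show _ ↔ (q : ℕ) = k - 1
    omega
end

section
/- Let δ_1, …, δ_k be nonzero, pairwise distinct reals and let R_k be the k×k real matrix with entries (R_k)_{pq} = δ_p^q for 1 ≤ p, q ≤ k. Then R_k is invertible, and the entries of the last row of its inverse are (R_k^{−1})_{kp} = 1 / ( δ_p · ∏_{q=1, q≠p}^{k} (δ_p − δ_q) ) for p = 1, …, k. -/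
/-!
Writing `R = diag(δ) * V` with `V` the usual Vandermonde matrix gives invertibility. For the last
row, let `w p` be the claimed entries. Then `∑ p, w p * R p q = ∑ p, δ p ^ q / ∏ (δ p - δ r)`, which
by Lagrange interpolation at the nodes `δ` (`Lagrange.coeff_eq_sum`) is the coefficient of degree
`k - 1` of `X ^ q`, for `q < k`. Hence `w ᵥ* R` is the last standard basis row vector, and
multiplying by `R⁻¹` on the right identifies `w` with the last row of `R⁻¹`.
-/

/-- **Last row of the inverse of the Vandermonde-type matrix (Eq. (B.2), after
[Eisinberg–Fedele]).** For nonzero pairwise distinct `δ_1, …, δ_k`, the matrix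
`(R_k)_{pq} = δ_p^q` is invertible and the last row of its inverse is
`(R_k⁻¹)_{kp} = 1 / (δ_p · ∏_{q≠p} (δ_p − δ_q))`. -/
theorem dpm_solver_v3_vandermonde_inverse_last_row
    (k : ℕ) (hk : 1 ≤ k) (δ : Fin k → ℝ)
    (hne : ∀ p, δ p ≠ 0) (hinj : Function.Injective δ)
    (R : Matrix (Fin k) (Fin k) ℝ)
    (hR : ∀ p q : Fin k, R p q = δ p ^ ((q : ℕ) + 1)) :
    IsUnit R ∧
    ∀ p : Fin k,
      R⁻¹ ⟨k - 1, by omega⟩ p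
        = 1 / (δ p * ∏ q ∈ Finset.univ.erase p, (δ p - δ q)) := by
  have hfac : R = Matrix.diagonal δ * Matrix.vandermonde δ := by
    ext p q
    rw [hR, Matrix.diagonal_mul, Matrix.vandermonde_apply, pow_succ']
  have hdet : IsUnit R.det := by
    rw [hfac, Matrix.det_mul, Matrix.det_diagonal]
    exact (mul_ne_zero (Finset.prod_ne_zero_iff.mpr fun p _ => hne p)
      (Matrix.det_vandermonde_ne_zero_iff.mpr hinj)).isUnit
  refine ⟨(Matrix.isUnit_iff_isUnit_det R).mpr hdet, fun p => ?_⟩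
  set w : Fin k → ℝ := fun p => 1 / (δ p * ∏ q ∈ Finset.univ.erase p, (δ p - δ q)) with hw
  have hrow : Matrix.vecMul w R = Pi.single ⟨k - 1, by omega⟩ 1 := by
    ext q
    have hcoeff := Lagrange.coeff_eq_sum (s := Finset.univ) (v := δ) hinj.injOn
      (P := (Polynomial.X ^ (q : ℕ) : Polynomial ℝ)) (by simp)
    have hsum : Matrix.vecMul w R q
        = (Polynomial.X ^ (q : ℕ) : Polynomial ℝ).coeff (k - 1) := by
      rw [Finset.card_univ, Fintype.card_fin] at hcoeff
      rw [hcoeff, Matrix.vecMul, dotProduct]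
      refine Finset.sum_congr rfl fun p _ => ?_
      have := hne p
      simp only [hw, hR, Polynomial.eval_pow, Polynomial.eval_X, pow_succ']
      rw [one_div, mul_inv, div_eq_mul_inv]
      field_simp
    rw [hsum, Polynomial.coeff_X_pow, Pi.single_apply]
    simp only [Fin.ext_iff, eq_comm]
  have hinv : Matrix.vecMul (Matrix.vecMul w R) R⁻¹ = w := by
    rw [Matrix.vecMul_vecMul, Matrix.mul_nonsing_inv R hdet, Matrix.vecMul_one]
  rw [hrow, Matrix.single_one_vecMul] at hinv
  exact congrFun hinv p
end

section
/- (Expressive power of the generalized parameterization.) Let α : ℝ → ℝ be positive and continuously differentiable, σ(λ) := α(λ)e^{−λ}, and ε : ℝ^D × ℝ → ℝ^D. Let α̃, γ : ℝ → ℝ^D be continuously differentiable with every component of α̃ strictly positive, and β : ℝ → ℝ^D continuous; define ψ(x, λ) := α̃(λ)·ε(x,λ) + β(λ)·x + γ(λ). Define the coefficients l(λ) := −σ(λ)·β(λ)/α̃(λ), s(λ) := −1 − α̃′(λ)/α̃(λ), b(λ) := −e^{−λ}·γ′(λ)/α̃(λ), and the constants ω := e^{λ_s}·α̃(λ_s),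 ξ := γ(λ_s). Then, with f(x,λ) := (σ(λ)ε(x,λ) − l(λ)·x)/α(λ) and g(x,λ) := e^{−∫_{λ_s}^{λ} s(τ)dτ}·f(x,λ) − ∫_{λ_s}^{λ} e^{−∫_{λ_s}^{r} s(τ)dτ}·b(r) dr, one has ψ(x, λ) = ω·g(x, λ) + ξ for all x ∈ ℝ^D and all λ ≥ λ_s. -/
open MeasureTheory Set

/-!
Everything happens one coordinate at a time. Since `s = -1 - (log α̃)'`, the fundamental theorem of
calculus gives `e^{λs} α̃(λs) · exp (-∫_{λs}^λ s) = e^λ α̃(λ)` (`omega_mul_exp_neg_integral`).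
So multiplication by `ω` turns the integrating factor in `g` into `e^λ α̃(λ)`: the first term of
`ω g` becomes `α̃ ε + β x`, because `σ / α = e^{-λ}`, and the integrand of the second becomes `-γ'`,
which integrates to `γ(λs) - γ(λ)`.
-/

/-- The scaled integrating factor in closed form, for one coordinate `a` of `α̃`. -/
lemma omega_mul_exp_neg_integral {a a' : ℝ → ℝ} (hpos : ∀ u, 0 < a u)
    (ha : ∀ u, HasDerivAt a (a' u) u) (ha' : Continuous a') (ls u : ℝ) :
    Real.exp ls * a ls * Real.exp (-(∫ τ in ls..u, (-1 - a' τ / a τ))) = Real.exp u * a u := by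
  have hcont : Continuous a := continuous_iff_continuousAt.2 fun v => (ha v).continuousAt
  have hderiv : ∀ v, HasDerivAt (fun w => -w - Real.log (a w)) (-1 - a' v / a v) v := fun v =>
    (hasDerivAt_id v).neg.sub ((ha v).log (hpos v).ne')
  have hint : Continuous fun v => -1 - a' v / a v :=
    continuous_const.sub (ha'.div hcont fun v => (hpos v).ne')
  rw [intervalIntegral.integral_eq_sub_of_hasDerivAt (fun v _ => hderiv v)
    (hint.intervalIntegrable _ _)]
  nth_rewrite 1 [← Real.exp_log (hpos ls)]
  nth_rewrite 2 [← Real.exp_log (hpos u)]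
  rw [← Real.exp_add, ← Real.exp_add, ← Real.exp_add]
  congr 1
  ring

/-- **Expressive power of the generalized parameterization (Appendix F.1).**
Any parameterization `ψ(x,λ) = α̃(λ)·ε(x,λ) + β(λ)·x + γ(λ)` (element-wise) coincides, up to a
fixed invertible affine transformation depending only on the base point `λs`, with the
generalized parameterization `g` defined by the coefficients
`l = −σ·β/α̃`, `s = −1 − α̃′/α̃`, `b = −e^{−λ}·γ′/α̃`, namely
`ψ(x, λ) = ω·g(x, λ) + ξ` with `ω = e^{λs}·α̃(λs)` and `ξ = γ(λs)`, for all `λ ≥ λs`. -/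
theorem dpm_solver_v3_expressive_power
    (D : ℕ) (ls : ℝ)
    (α σ : ℝ → ℝ) (hαpos : ∀ u, 0 < α u) (hα : ContDiff ℝ 1 α)
    (hσ : ∀ u, σ u = α u * Real.exp (-u))
    (ε : (Fin D → ℝ) → ℝ → Fin D → ℝ)
    (at' at'd gt gt'd : ℝ → Fin D → ℝ) (β : ℝ → Fin D → ℝ)
    (hatpos : ∀ u i, 0 < at' u i)
    (hat : ∀ u (i : Fin D), HasDerivAt (fun v => at' v i) (at'd u i) u)
    (hatc : Continuous at'd)
    (hgt : ∀ u (i : Fin D), HasDerivAt (fun v => gt v i) (gt'd u i) u)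
    (hgtc : Continuous gt'd)
    (hβ : Continuous β)
    -- the parameterization ψ and the induced coefficients l, s, b and constants ω, ξ
    (ψ : (Fin D → ℝ) → ℝ → Fin D → ℝ)
    (hψ : ∀ xv u i, ψ xv u i = at' u i * ε xv u i + β u i * xv i + gt u i)
    (l s b : ℝ → Fin D → ℝ)
    (hldef : ∀ u i, l u i = -(σ u * β u i / at' u i))
    (hsdef : ∀ u i, s u i = -1 - at'd u i / at' u i)
    (hbdef : ∀ u i, b u i = -(Real.exp (-u) * gt'd u i / at' u i))
    (ω ξ : Fin D → ℝ)
    (hω : ∀ i, ω i = Real.exp ls * at' ls i) (hξ : ∀ i, ξ i = gt ls i)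
    -- the induced model `f` and the generalized parameterization `g`
    (f : (Fin D → ℝ) → ℝ → Fin D → ℝ)
    (hf : ∀ xv u i, f xv u i = (σ u * ε xv u i - l u i * xv i) / α u)
    (g : (Fin D → ℝ) → ℝ → Fin D → ℝ)
    (hg : ∀ xv u i, g xv u i = Real.exp (-(∫ τ in ls..u, s τ i)) * f xv u i
        - ∫ r in ls..u, Real.exp (-(∫ τ in ls..r, s τ i)) * b r i) :
    ∀ (xv : Fin D → ℝ) (u : ℝ), ls ≤ u → ∀ i : Fin D,
      ψ xv u i = ω i * g xv u i + ξ i := by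
  intro xv u _ i
  have hE : ∀ v, ω i * Real.exp (-(∫ τ in ls..v, s τ i)) = Real.exp v * at' v i := fun v => by
    simp only [hsdef, hω]
    exact omega_mul_exp_neg_integral (fun v => hatpos v i) (fun v => hat v i)
      ((continuous_apply i).comp hatc) ls v
  have hI : ω i * (∫ r in ls..u, Real.exp (-(∫ τ in ls..r, s τ i)) * b r i)
      = gt ls i - gt u i := by
    have hpt : ∀ r, ω i * (Real.exp (-(∫ τ in ls..r, s τ i)) * b r i) = -gt'd r i := fun r => by
      have hne := (hatpos r i).ne'
      rw [← mul_assoc, hE, hbdef, Real.exp_neg]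
      field_simp
    rw [← intervalIntegral.integral_const_mul]
    simp only [hpt]
    rw [intervalIntegral.integral_neg, intervalIntegral.integral_eq_sub_of_hasDerivAt
      (fun v _ => hgt v i) (((continuous_apply i).comp hgtc).intervalIntegrable _ _)]
    ring
  have hF : Real.exp u * at' u i * f xv u i = at' u i * ε xv u i + β u i * xv i := by
    have hne := (hatpos u i).ne'
    have hα0 := (hαpos u).ne'
    rw [hf, hldef, hσ, Real.exp_neg]
    field_simp
    ring
  rw [hg, mul_sub, ← mul_assoc, hE, hI, hF, hψ, hξ]
  ring
end

section
/- Let g : ℝ → ℝ^D be (n+1)-times continuously differentiable on a neighborhood of λ_s, and fix pairwise distinct nonzero reals r_1, …, r_n. For h > 0, set δ_k := r_k·h, and let (u_1(h), …, u_n(h)) be the solution of the n×n linear system Σ_{q=1}^{n} δ_k^q·u_q = g(λ_s + δ_k) − g(λ_s) (k = 1, …, n). Then there exist constants C > 0 and h₀ > 0 such that for all 0 < h ≤ h₀ and every 1 ≤ k ≤ n, ‖ u_k − g^{(k)}(λ_s)/k! ‖ ≤ C·h^{n+1−k}. -/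
/-!
By Taylor's theorem the vectors `c_q = g^{(q)}(λs)/q!` satisfy the same linear system as the `u_q`
up to a remainder of size `O(h^{n+1})` (`taylor_remainder_bound`). Writing `δ_k = r_k h`, the errors
`e_q = u_q - c_q` therefore satisfy `∑_q r_k^q (h^q e_q) = O(h^{n+1})`. The matrix `(r_k^q)` does not
depend on `h` and is invertible (a Vandermonde matrix with its rows scaled by the nonzero `r_k`), so
`h^q e_q = O(h^{n+1})`, and dividing by `h^q` gives the claim.
-/

open Set Filter Topology

/-- Taylor's theorem at an interior point, with the order-`n` polynomial written without its
constant term. The remainder of order `n + 1` is `o(|t|^{n+1})`, and the top term of the Taylor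
polynomial is `O(|t|^{n+1})`. -/
lemma taylor_remainder_bound {D n : ℕ} {ls a : ℝ} (ha : 0 < a) {g : ℝ → Fin D → ℝ}
    (hg : ContDiffOn ℝ (n + 1 : ℕ) g (Set.Icc (ls - a) (ls + a))) :
    ∃ M ≥ (0:ℝ), ∃ ε > (0:ℝ), ∀ t : ℝ, |t| < ε →
      ‖g (ls + t) - g ls - ∑ j : Fin n, t ^ ((j : ℕ) + 1) •
        (((Nat.factorial ((j : ℕ) + 1) : ℝ))⁻¹ •
          iteratedDerivWithin ((j : ℕ) + 1) g (Set.Icc (ls - a) (ls + a)) ls)‖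
        ≤ M * |t| ^ (n + 1) := by
  set s := Set.Icc (ls - a) (ls + a) with hs
  have hmem : ls ∈ s := ⟨by linarith, by linarith⟩
  have hnhds : s ∈ 𝓝 ls := Icc_mem_nhds (by linarith) (by linarith)
  have hT := taylor_isLittleO (convex_Icc _ _) hmem hg
  rw [nhdsWithin_eq_nhds.2 hnhds] at hT
  have hb := hT.bound one_pos
  obtain ⟨ε, hε, hball⟩ := Metric.eventually_nhds_iff.1 hb
  set c := iteratedDerivWithin (n + 1) g s ls with hc
  refine ⟨1 + ‖((Nat.factorial (n + 1) : ℝ))⁻¹ • c‖, by positivity, ε, hε, fun t ht => ?_⟩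
  have h1 := hball (y := ls + t) (by simpa [Real.dist_eq] using ht)
  rw [taylor_within_apply, Finset.sum_range_succ, Finset.sum_range_succ'] at h1
  simp only [add_sub_cancel_left, Nat.factorial_zero, Nat.cast_one, inv_one, pow_zero, mul_one,
    one_smul, iteratedDerivWithin_zero, one_mul, norm_pow, Real.norm_eq_abs] at h1
  rw [Finset.sum_range] at h1
  have hsum : ∑ j : Fin n, t ^ ((j : ℕ) + 1) • (((Nat.factorial ((j : ℕ) + 1) : ℝ))⁻¹ •
        iteratedDerivWithin ((j : ℕ) + 1) g s ls) =
      ∑ j : Fin n, (((Nat.factorial ((j : ℕ) + 1) : ℝ))⁻¹ * t ^ ((j : ℕ) + 1)) •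
        iteratedDerivWithin ((j : ℕ) + 1) g s ls :=
    Finset.sum_congr rfl fun j _ => by rw [smul_smul, mul_comm]
  rw [hsum]
  set S := ∑ j : Fin n, (((Nat.factorial ((j : ℕ) + 1) : ℝ))⁻¹ * t ^ ((j : ℕ) + 1)) •
        iteratedDerivWithin ((j : ℕ) + 1) g s ls
  have hsplit : g (ls + t) - g ls - S =
      (g (ls + t) - (S + g ls + (((Nat.factorial (n + 1) : ℝ))⁻¹ * t ^ (n + 1)) • c)) +
        t ^ (n + 1) • (((Nat.factorial (n + 1) : ℝ))⁻¹ • c) := by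
    rw [smul_smul, mul_comm (t ^ (n + 1))]; abel
  rw [hsplit]
  refine (norm_add_le _ _).trans ?_
  rw [norm_smul (t ^ (n + 1)), norm_pow, Real.norm_eq_abs]
  linarith

/-- The coefficient matrix of the system at `h = 1` has a left inverse. -/
lemma exists_left_inverse {n : ℕ} {r : Fin n → ℝ} (hrne : ∀ k, r k ≠ 0)
    (hrinj : Function.Injective r) :
    ∃ B : Matrix (Fin n) (Fin n) ℝ,
      B * Matrix.of (fun k j : Fin n => r k ^ ((j : ℕ) + 1)) = 1 := by
  have hA : Matrix.of (fun k j : Fin n => r k ^ ((j : ℕ) + 1)) =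
      Matrix.diagonal r * Matrix.vandermonde r := by
    ext k j
    simp [Matrix.diagonal_mul, Matrix.vandermonde_apply, pow_succ']
  refine ⟨_, Matrix.nonsing_inv_mul _ ?_⟩
  rw [hA, Matrix.det_mul, Matrix.det_diagonal, isUnit_iff_ne_zero]
  exact mul_ne_zero (Finset.prod_ne_zero_iff.2 fun k _ => hrne k)
    (Matrix.det_vandermonde_ne_zero_iff.2 hrinj)

/-- **Accuracy of the finite-difference derivative estimates.**
If `g` is `(n+1)`-times continuously differentiable near `λs` and `(u_1(h), …, u_n(h))` solves
the Vandermonde-type system `Σ_q δ_k^q·u_q = g(λs + δ_k) − g(λs)` with offsets `δ_k = r_k·h`,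
then `‖u_k − g^{(k)}(λs)/k!‖ ≤ C·h^{n+1−k}` for all small `h > 0`. -/
theorem dpm_solver_v3_derivative_estimate_accuracy
    (D n : ℕ) (ls a : ℝ) (ha : 0 < a)
    (r : Fin n → ℝ) (hrne : ∀ k, r k ≠ 0) (hrinj : Function.Injective r)
    (g : ℝ → Fin D → ℝ)
    (hg : ContDiffOn ℝ (n + 1 : ℕ∞) g (Set.Icc (ls - a) (ls + a))) :
    ∃ C > (0:ℝ), ∃ h₀ > (0:ℝ), ∀ h : ℝ, 0 < h → h ≤ h₀ →
      ∀ u : Fin n → Fin D → ℝ,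
        (∀ k : Fin n, ∀ i : Fin D,
          (∑ j : Fin n, (r k * h) ^ ((j : ℕ) + 1) * u j i)
            = g (ls + r k * h) i - g ls i) →
        ∀ k : Fin n,
          ‖u k - ((Nat.factorial ((k : ℕ) + 1) : ℝ))⁻¹ •
              iteratedDerivWithin ((k : ℕ) + 1) g (Set.Icc (ls - a) (ls + a)) ls‖
            ≤ C * h ^ (n - (k : ℕ)) := by
  obtain ⟨M, hM, ε, hε, hT⟩ := taylor_remainder_bound (n := n) ha (by exact_mod_cast hg)
  obtain ⟨B, hB⟩ := exists_left_inverse hrne hrinj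
  set c : Fin n → Fin D → ℝ := fun j => ((Nat.factorial ((j : ℕ) + 1) : ℝ))⁻¹ •
    iteratedDerivWithin ((j : ℕ) + 1) g (Set.Icc (ls - a) (ls + a)) ls with hc
  have hr : 0 ≤ ∑ k, |r k| := Finset.sum_nonneg fun k _ => abs_nonneg _
  set K : Fin n → ℝ := fun j => ∑ k, |B j k| * (M * |r k| ^ (n + 1)) with hK
  have hK0 : ∀ j, 0 ≤ K j := fun j => Finset.sum_nonneg fun k _ => by positivity
  refine ⟨1 + ∑ j, K j, by have := Finset.sum_nonneg fun j (_ : j ∈ Finset.univ) => hK0 j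
                           linarith,
    ε / (2 * (1 + ∑ k, |r k|)), by positivity, ?_⟩
  intro h hh hh0 u hu k
  change ‖u k - c k‖ ≤ _
  have hsmall : ∀ k, |r k * h| < ε := fun k => by
    have h1 : |r k| ≤ ∑ k, |r k| :=
      Finset.single_le_sum (f := fun k => |r k|) (fun k _ => abs_nonneg _) (Finset.mem_univ k)
    rw [le_div_iff₀ (by positivity)] at hh0
    rw [abs_mul, abs_of_pos hh]
    nlinarith [mul_le_mul_of_nonneg_right h1 hh.le]
  -- The scaled errors `h ^ (j + 1) * (u j - c j)` solve the `h`-independent system,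
  -- with the Taylor remainders on the right-hand side.
  have hsys : ∀ k i, |∑ j : Fin n, r k ^ ((j : ℕ) + 1) * (h ^ ((j : ℕ) + 1) * (u j i - c j i))|
      ≤ M * |r k| ^ (n + 1) * h ^ (n + 1) := fun k i => by
    have h1 := (norm_le_pi_norm _ i).trans (hT (r k * h) (hsmall k))
    simp only [Pi.sub_apply, Finset.sum_apply, Pi.smul_apply, smul_eq_mul] at h1
    rw [← hu k i, ← Finset.sum_sub_distrib, Real.norm_eq_abs, abs_mul, abs_of_pos hh, mul_pow,
      ← mul_assoc] at h1
    refine le_of_eq_of_le (congrArg _ (Finset.sum_congr rfl fun j _ => ?_)) h1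
    simp only [hc, Pi.smul_apply, smul_eq_mul]
    ring
  have hcomp : ∀ i, h ^ ((k : ℕ) + 1) * |u k i - c k i| ≤ K k * h ^ (n + 1) := fun i => by
    set v : Fin n → ℝ := fun j => h ^ ((j : ℕ) + 1) * (u j i - c j i) with hv
    have h1 : v k = ∑ l, B k l * ∑ j : Fin n, r l ^ ((j : ℕ) + 1) * v j := by
      have h2 : B.mulVec ((Matrix.of (fun k j : Fin n => r k ^ ((j : ℕ) + 1))).mulVec v) = v := by
        rw [Matrix.mulVec_mulVec, hB, Matrix.one_mulVec]
      exact (congrFun h2 k).symm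
    have h3 : h ^ ((k : ℕ) + 1) * |u k i - c k i| = |v k| := by
      rw [hv, abs_mul, abs_of_pos (pow_pos hh _)]
    rw [h3, h1, hK, Finset.sum_mul]
    refine (Finset.abs_sum_le_sum_abs _ _).trans (Finset.sum_le_sum fun l _ => ?_)
    rw [abs_mul, mul_assoc]
    exact mul_le_mul_of_nonneg_left (hsys l i) (abs_nonneg _)
  have hKle : K k ≤ 1 + ∑ j, K j := by
    have := Finset.single_le_sum (fun j _ => hK0 j) (Finset.mem_univ k)
    linarith
  have hpow : h ^ (n + 1) = h ^ ((k : ℕ) + 1) * h ^ (n - (k : ℕ)) := by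
    rw [← pow_add]; congr 1; have := k.isLt; omega
  refine le_trans ((pi_norm_le_iff_of_nonneg (mul_nonneg (hK0 k) (pow_nonneg hh.le _))).2
    fun i => ?_) (mul_le_mul_of_nonneg_right hKle (pow_nonneg hh.le _))
  refine le_of_mul_le_mul_left ?_ (pow_pos hh ((k : ℕ) + 1))
  calc _ ≤ K k * h ^ (n + 1) := hcomp i
    _ = _ := by rw [hpow]; ring
end
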